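/- arXiv:2011.03025 — 7 statements merged into one kernel-verified Lean document; each statement's English description precedes it below -/
import Mathlib

section
/- Let λ, c, t > 0 and let k be a real number with c·k > λ. Then ∫_{−ct}^{ct} e^{ikx}·I₀((λ/c)·√(c²t²−x²)) dx = (2c/√(c²k²−λ²))·sin(t·√(c²k²−λ²)), where the integral is a complex-valued integral of the complex exponential against the real Bessel factor. -/
/-!
The Fourier integral is evaluated by expanding both factors in power series. Since the Bessel
factor is even in `x`, `e^{ikx}` may be replaced by `cos (k x)`. With `a = c t` and `μ = lam / c`,
the integrand `cos (k x) * I₀(μ √(a² - x²))` is a double series whose terms are constant multiples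
of `x^{2m} (a² - x²)^n`, dominated on `[-a, a]` by a summable double sequence, so it can be
integrated termwise. The Beta-type integrals `∫ x^{2m} (a² - x²)^n` (`integral_beta`) follow from
the Pascal-like recursion obtained from `(a² - x²)^{n+1} = (a² - x²) (a² - x²)^n`. Grouping the
terms with `m + n = j`, the binomial theorem collapses them to
`2 (-1)^j a^{2j+1} (k² - μ²)^j / (2j+1)!`, which is the power series of
`2 sin (a s) / s` with `s² = k² - μ²`.
-/

open MeasureTheory Real

/-- Modified Bessel function of the first kind of order 0, `I₀(y) = ∑ (y/2)^{2k}/(k!)²`. -/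
noncomputable def besselI0 (y : ℝ) : ℝ :=
  ∑' k : ℕ, (y / 2) ^ (2 * k) / ((Nat.factorial k : ℝ) ^ 2)



/-- Induction on `n`, for all `m` at once: the integrals and the closed form both satisfy
`P(m, n+1) = a² P(m, n) - P(m+1, n)`. -/
lemma integral_beta (a : ℝ) (n : ℕ) : ∀ m : ℕ,
    ∫ x in (-a)..a, x ^ (2 * m) * (a ^ 2 - x ^ 2) ^ n
      = 2 * (m + n).factorial * (2 * m).factorial * 4 ^ n * n.factorial * a ^ (2 * (m + n) + 1)
        / (m.factorial * (2 * (m + n) + 1).factorial) := by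
  induction n with
  | zero =>
    intro m
    have h1 : ((2 * m + 1).factorial : ℝ) = (2 * m + 1) * (2 * m).factorial := by
      rw [Nat.factorial_succ]; push_cast; ring
    have h2 : ((2 * m).factorial : ℝ) ≠ 0 := by positivity
    have h3 : (m.factorial : ℝ) ≠ 0 := by positivity
    have h4 : (2 * m + 1 : ℝ) ≠ 0 := by positivity
    have h5 : (-a) ^ (2 * m + 1) = -a ^ (2 * m + 1) := Odd.neg_pow ⟨m, rfl⟩ a
    simp only [pow_zero, mul_one, add_zero, integral_pow, h1, h5, Nat.factorial_zero, Nat.cast_one]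
    push_cast
    field_simp
    ring
  | succ n ih =>
    intro m
    have e : ∀ x : ℝ, x ^ (2 * m) * (a ^ 2 - x ^ 2) ^ (n + 1)
        = a ^ 2 * (x ^ (2 * m) * (a ^ 2 - x ^ 2) ^ n)
          - x ^ (2 * (m + 1)) * (a ^ 2 - x ^ 2) ^ n := by intro x; ring
    simp_rw [e]
    rw [intervalIntegral.integral_sub (by apply Continuous.intervalIntegrable; fun_prop)
      (by apply Continuous.intervalIntegrable; fun_prop), intervalIntegral.integral_const_mul, ih m, ih (m + 1)]
    have g1 : m + 1 + n = (m + n) + 1 := by ring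
    have g2 : m + (n + 1) = (m + n) + 1 := by ring
    have g3 : 2 * (m + n + 1) + 1 = (2 * (m + n) + 1) + 1 + 1 := by ring
    have g4 : 2 * (m + 1) = 2 * m + 1 + 1 := by ring
    have p2 : ((2 * (m + n) + 1).factorial : ℝ) ≠ 0 := by positivity
    have p3 : (m.factorial : ℝ) ≠ 0 := by positivity
    have p4 : (2 * (m + n) + 1 + 1 : ℝ) ≠ 0 := by positivity
    have p5 : (2 * (m + n) + 1 + 1 + 1 : ℝ) ≠ 0 := by positivity
    have p6 : (m + 1 : ℝ) ≠ 0 := by positivity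
    rw [g1, g2, g3, g4]
    rw [Nat.factorial_succ (2 * (m + n) + 1 + 1), Nat.factorial_succ (2 * (m + n) + 1),
      Nat.factorial_succ (m + n), Nat.factorial_succ (2 * m + 1), Nat.factorial_succ (2 * m),
      Nat.factorial_succ m, Nat.factorial_succ n]
    push_cast
    field_simp
    ring

lemma besselI0_summable (y : ℝ) :
    Summable fun n : ℕ => (y / 2) ^ (2 * n) / ((Nat.factorial n : ℝ) ^ 2) := by
  refine Summable.of_nonneg_of_le (fun n => ?_) (fun n => ?_)
    (Real.summable_pow_div_factorial ((y / 2) ^ 2))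
  · rw [pow_mul]; positivity
  · rw [pow_mul]
    have h : (1 : ℝ) ≤ n.factorial := by exact_mod_cast n.factorial_pos
    gcongr
    nlinarith

lemma cosh_terms_summable (y : ℝ) :
    Summable fun m : ℕ => y ^ (2 * m) / ((2 * m).factorial : ℝ) :=
  (Real.hasSum_cosh y).summable

/-- Termwise integration of the double series; the terms are dominated on `[-a, a]` by the terms
of the series of `cosh (k a) * I₀(μ a)`. -/
lemma hasSum_integral_cos_mul (a μ k : ℝ) (ha : 0 < a) :
    HasSum (fun p : ℕ × ℕ => ((-1) ^ p.1 * k ^ (2 * p.1) / ((2 * p.1).factorial : ℝ)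
        * ((μ ^ 2 / 4) ^ p.2 / (p.2.factorial : ℝ) ^ 2))
        * ∫ x in (-a)..a, x ^ (2 * p.1) * (a ^ 2 - x ^ 2) ^ p.2)
      (∫ x in (-a)..a, Real.cos (k * x) * besselI0 (μ * Real.sqrt (a ^ 2 - x ^ 2))) := by
  simp_rw [← intervalIntegral.integral_const_mul]
  refine intervalIntegral.hasSum_integral_of_dominated_convergence
    (fun p _ => ((k * a) ^ (2 * p.1) / ((2 * p.1).factorial : ℝ))
      * ((μ * a / 2) ^ (2 * p.2) / (p.2.factorial : ℝ) ^ 2)) ?_ ?_ ?_ ?_ ?_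
  · intro p
    exact Continuous.aestronglyMeasurable (by fun_prop)
  · intro p
    refine Filter.Eventually.of_forall fun x hx => ?_
    rw [Set.uIoc_of_le (by linarith)] at hx
    have h1 : x ^ 2 ≤ a ^ 2 := by nlinarith [hx.1, hx.2]
    have h2 : |a ^ 2 - x ^ 2| ≤ a ^ 2 := by
      rw [abs_of_nonneg (by linarith)]; nlinarith [sq_nonneg x]
    rw [Real.norm_eq_abs]
    have e1 : (k * a) ^ (2 * p.1) = k ^ (2 * p.1) * (a ^ 2) ^ p.1 := by
      rw [mul_pow, pow_mul a]
    have e2 : (μ * a / 2) ^ (2 * p.2) = (μ ^ 2 / 4) ^ p.2 * (a ^ 2) ^ p.2 := by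
      rw [pow_mul, ← mul_pow]; congr 1; ring
    have e3 : |k| ^ (2 * p.1) = k ^ (2 * p.1) := Even.pow_abs ⟨p.1, by ring⟩ k
    have e4 : |x| ^ (2 * p.1) = (x ^ 2) ^ p.1 := by rw [pow_mul, sq_abs]
    have e6 : 0 ≤ k ^ (2 * p.1) := by rw [pow_mul]; positivity
    simp only [abs_mul, abs_div, abs_pow, abs_neg, abs_one, one_pow, one_mul, Nat.abs_cast, e1, e2,
      e3, e4]
    rw [show |μ| ^ 2 / |(4 : ℝ)| = μ ^ 2 / 4 by rw [sq_abs, abs_of_pos (by norm_num : (0:ℝ) < 4)]]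
    calc _ ≤ k ^ (2 * p.1) / ((2 * p.1).factorial : ℝ)
          * ((μ ^ 2 / 4) ^ p.2 / (p.2.factorial : ℝ) ^ 2) * ((a ^ 2) ^ p.1 * (a ^ 2) ^ p.2) := by
          gcongr
      _ = _ := by ring
  · refine Filter.Eventually.of_forall fun x _ => ?_
    refine Summable.mul_of_nonneg (cosh_terms_summable (k * a)) (besselI0_summable (μ * a)) ?_ ?_
    · intro m; simp only [Pi.zero_apply, pow_mul]; positivity
    · intro m; simp only [Pi.zero_apply, pow_mul]; positivity
  · exact continuous_const.intervalIntegrable _ _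
  · refine Filter.Eventually.of_forall fun x hx => ?_
    rw [Set.uIoc_of_le (by linarith)] at hx
    have h1 : 0 ≤ a ^ 2 - x ^ 2 := by nlinarith [hx.1, hx.2]
    have hI := (besselI0_summable (μ * Real.sqrt (a ^ 2 - x ^ 2))).hasSum
    have hC := Real.hasSum_cos (k * x)
    have hs := summable_mul_of_summable_norm hC.summable.norm hI.summable.norm
    have hM := hC.mul hI hs
    refine (congrArg (HasSum · _) (funext fun p => ?_)).mp hM
    have e2 : (μ * Real.sqrt (a ^ 2 - x ^ 2) / 2) ^ (2 * p.2)
        = (μ ^ 2 / 4) ^ p.2 * (a ^ 2 - x ^ 2) ^ p.2 := by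
      rw [pow_mul, ← mul_pow]; congr 1
      rw [div_pow, mul_pow, Real.sq_sqrt h1]; ring
    rw [e2, mul_pow k x]
    ring

/-- Summing the double series along the antidiagonals `m + n = j`. -/
lemma integral_cos_mul (a μ k s : ℝ) (ha : 0 < a) (hs : s ≠ 0) (hs2 : s ^ 2 = k ^ 2 - μ ^ 2) :
    ∫ x in (-a)..a, Real.cos (k * x) * besselI0 (μ * Real.sqrt (a ^ 2 - x ^ 2))
      = 2 / s * Real.sin (a * s) := by
  have h := hasSum_integral_cos_mul a μ k ha
  rw [← Finset.HasAntidiagonal.sigmaAntidiagonalEquivProd.hasSum_iff] at h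
  have h' := h.sigma (fun j => hasSum_fintype _)
  refine h'.unique ?_
  have hS := (Real.hasSum_sin (a * s)).mul_left (2 / s)
  refine (congrArg (HasSum · _) (funext fun j => Eq.symm ?_)).mp hS
  have hb : ∀ y : ℕ × ℕ, y.1 + y.2 = j →
      ((-1) ^ y.1 * k ^ (2 * y.1) / ((2 * y.1).factorial : ℝ)
        * ((μ ^ 2 / 4) ^ y.2 / (y.2.factorial : ℝ) ^ 2))
        * ∫ x in (-a)..a, x ^ (2 * y.1) * (a ^ 2 - x ^ 2) ^ y.2
      = 2 * a ^ (2 * j + 1) / ((2 * j + 1).factorial : ℝ)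
        * ((j.choose y.1) • ((-k ^ 2) ^ y.1 * (μ ^ 2) ^ y.2)) := by
    rintro ⟨m, n⟩ rfl
    simp only
    rw [integral_beta, nsmul_eq_mul, Nat.cast_add_choose, div_pow, neg_pow (k ^ 2) m, pow_mul k]
    field_simp
  have hsum := Finset.sum_coe_sort (Finset.HasAntidiagonal.antidiagonal j) (fun y : ℕ × ℕ =>
    ((-1) ^ y.1 * k ^ (2 * y.1) / ((2 * y.1).factorial : ℝ)
        * ((μ ^ 2 / 4) ^ y.2 / (y.2.factorial : ℝ) ^ 2))
        * ∫ x in (-a)..a, x ^ (2 * y.1) * (a ^ 2 - x ^ 2) ^ y.2)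
  refine hsum.trans ?_
  rw [Finset.sum_congr rfl (fun y hy => hb y (Finset.HasAntidiagonal.mem_antidiagonal.1 hy)), ← Finset.mul_sum,
    ← (Commute.all (-k ^ 2) (μ ^ 2)).add_pow' j]
  have e : -k ^ 2 + μ ^ 2 = (-1) * s ^ 2 := by rw [hs2]; ring
  rw [e, mul_pow, mul_pow a s, pow_succ s (2 * j), pow_mul s]
  field_simp

lemma besselI0_continuous : Continuous besselI0 := by
  rw [continuous_iff_continuousAt]
  intro y
  have h : ContinuousOn besselI0 (Metric.ball 0 (|y| + 1)) := by
    unfold besselI0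
    refine continuousOn_tsum (fun n => by fun_prop) (besselI0_summable (|y| + 1)) ?_
    intro n z hz
    rw [mem_ball_zero_iff, Real.norm_eq_abs] at hz
    rw [Real.norm_eq_abs, abs_div, abs_pow, abs_div, abs_pow, Nat.abs_cast,
      abs_of_pos (by norm_num : (0:ℝ) < 2)]
    gcongr
  exact h.continuousAt (Metric.isOpen_ball.mem_nhds (by simp))

/-- For `λ, c, t > 0` and `c·k > λ`,
`∫_{−ct}^{ct} e^{ikx}·I₀((λ/c)·√(c²t²−x²)) dx = (2c/√(c²k²−λ²))·sin(t·√(c²k²−λ²))`. -/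
theorem circular_telegraph_fourier_I0
    (lam c t k : ℝ) (hlam : 0 < lam) (hc : 0 < c) (ht : 0 < t) (hk : c * k > lam) :
    ∫ x in (-(c * t))..(c * t),
        Complex.exp (Complex.I * k * x) *
          (besselI0 (lam / c * Real.sqrt (c ^ 2 * t ^ 2 - x ^ 2)) : ℂ)
      = ((2 * c / Real.sqrt (c ^ 2 * k ^ 2 - lam ^ 2)) *
          Real.sin (t * Real.sqrt (c ^ 2 * k ^ 2 - lam ^ 2)) : ℝ) := by
  have hpos : 0 < c ^ 2 * k ^ 2 - lam ^ 2 := by nlinarith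
  set r := Real.sqrt (c ^ 2 * k ^ 2 - lam ^ 2) with hr
  have hr0 : 0 < r := Real.sqrt_pos.2 hpos
  have hr2 : r ^ 2 = c ^ 2 * k ^ 2 - lam ^ 2 := Real.sq_sqrt hpos.le
  have hmain := integral_cos_mul (c * t) (lam / c) k (r / c) (by positivity) (by positivity)
    (by rw [div_pow, hr2]; field_simp)
  rw [mul_pow] at hmain
  rw [show c * t * (r / c) = t * r by field_simp, show 2 / (r / c) = 2 * c / r by field_simp]
    at hmain
  rw [← hmain, ← intervalIntegral.integral_ofReal]
  set g : ℝ → ℝ := fun x => besselI0 (lam / c * Real.sqrt (c ^ 2 * t ^ 2 - x ^ 2)) with hg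
  have hgc : Continuous g := besselI0_continuous.comp (by fun_prop)
  have hgneg : ∀ x, g (-x) = g x := fun x => by simp [hg]
  change ∫ x in (-(c * t))..(c * t), Complex.exp (Complex.I * k * x) * (g x : ℂ)
    = ∫ x in (-(c * t))..(c * t), ((Real.cos (k * x) * g x : ℝ) : ℂ)
  have hflip : ∫ x in (-(c * t))..(c * t), Complex.exp (-(Complex.I * k * x)) * (g x : ℂ)
      = ∫ x in (-(c * t))..(c * t), Complex.exp (Complex.I * k * x) * (g x : ℂ) := by
    have := intervalIntegral.integral_comp_neg (a := -(c * t)) (b := c * t)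
      (fun x : ℝ => Complex.exp (Complex.I * k * x) * (g x : ℂ))
    simpa [hgneg] using this
  have hadd : (∫ x in (-(c * t))..(c * t), Complex.exp (Complex.I * k * x) * (g x : ℂ))
      + ∫ x in (-(c * t))..(c * t), Complex.exp (-(Complex.I * k * x)) * (g x : ℂ)
      = 2 * ∫ x in (-(c * t))..(c * t), ((Real.cos (k * x) * g x : ℝ) : ℂ) := by
    rw [← intervalIntegral.integral_add (by apply Continuous.intervalIntegrable; fun_prop)
      (by apply Continuous.intervalIntegrable; fun_prop), ← intervalIntegral.integral_const_mul]
    congr 1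
    funext x
    push_cast
    rw [Complex.cos, show (k * x : ℂ) * Complex.I = Complex.I * k * x by ring,
      show -(k * x : ℂ) * Complex.I = -(Complex.I * k * x) by ring]
    ring
  rw [hflip] at hadd
  linear_combination hadd / 2
end

section
/- Let λ, c, t > 0 and let k be a real number with c·k > λ. Then ∫_{−ct}^{ct} e^{ikx}·λct·I₁((λ/c)·√(c²t²−x²))/√(c²t²−x²) dx = 2c·[cos(t·√(c²k²−λ²)) − cos(kct)]. (The integrand λct·I₁((λ/c)√(c²t²−x²))/√(c²t²−x²) is the t-derivative of I₀((λ/c)√(c²t²−x²)).) -/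
/-! The integrand is expanded in a double power series.  With `a = c t`, the quotient
`I₁((λ/c)√(a²-x²)) / √(a²-x²)` is a power series in `a² - x²` (`hasSum_besselI1_div_sqrt`), and
`e^{ikx} = cos (kx) + i sin (kx)` is a power series in `x`.  The product of the two series is
dominated on `[-a, a]` by a summable family of constants, so it may be integrated term by term
(`hasSum_integral`).  The odd powers of `x` integrate to zero and the even ones give the Beta-type
integrals `∫ x^{2m} (a²-x²)^j` (`integral_even_pow_mul`).  Grouping the terms with `j + m = n`
yields, by the binomial theorem (`sum_antidiagonal_term`),
`2c (-1)^{n+1} t^{2n+2}/(2n+2)! · ((c²k²-λ²)^{n+1} - (c²k²)^{n+1})`,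
which is the term of degree `2n+2` in `t` of `2c (cos (t√(c²k²-λ²)) - cos (kct))`; the terms of
degree zero cancel. -/


open MeasureTheory Real

/-- Modified Bessel function of the first kind of order 1,
`I₁(y) = ∑ (y/2)^{2k+1}/(k!·(k+1)!)`. -/
noncomputable def besselI1 (y : ℝ) : ℝ :=
  ∑' j : ℕ, (y / 2) ^ (2 * j + 1) / ((Nat.factorial j : ℝ) * (Nat.factorial (j + 1) : ℝ))

/-- Coefficient of `(c²t² - x²)^j` in `λct·I₁((λ/c)√(c²t²-x²))/√(c²t²-x²)`. -/
noncomputable def besselCoeff (lam c t : ℝ) (j : ℕ) : ℝ :=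
  lam * c * t * ((lam / (2 * c)) ^ (2 * j + 1) / ((j.factorial : ℝ) * ((j + 1).factorial : ℝ)))

/-- The terms of degree `2m` and `2m+1` of the power series of `e^{ikx}`. -/
noncomputable def expTerm (k : ℝ) (m : ℕ) (x : ℝ) : ℂ :=
  (((-1) ^ m * (k * x) ^ (2 * m) / ((2 * m).factorial : ℝ) : ℝ) : ℂ) +
    Complex.I * (((-1) ^ m * (k * x) ^ (2 * m + 1) / ((2 * m + 1).factorial : ℝ) : ℝ) : ℂ)

/-- The integral of the `(j, m)` term of the double series. -/
noncomputable def intTerm (lam c t k : ℝ) (p : ℕ × ℕ) : ℝ :=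
  besselCoeff lam c t p.1 * ((-1) ^ p.2 * k ^ (2 * p.2) / ((2 * p.2).factorial : ℝ)) *
    ∫ x in (-(c * t))..(c * t), x ^ (2 * p.2) * ((c * t) ^ 2 - x ^ 2) ^ p.1

lemma summable_bessel_series (z : ℝ) :
    Summable fun j : ℕ => z ^ j / ((j.factorial : ℝ) * ((j + 1).factorial : ℝ)) := by
  refine Summable.of_norm_bounded (Real.summable_pow_div_factorial |z|) fun j => ?_
  rw [norm_div, norm_pow, Real.norm_eq_abs, Real.norm_eq_abs, abs_of_nonneg (by positivity :
    (0 : ℝ) ≤ (j.factorial : ℝ) * ((j + 1).factorial : ℝ))]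
  have h1 : (1 : ℝ) ≤ ((j + 1).factorial : ℝ) := by exact_mod_cast Nat.factorial_pos (j + 1)
  have h2 : (0 : ℝ) < (j.factorial : ℝ) := by exact_mod_cast Nat.factorial_pos j
  gcongr
  nlinarith

lemma summable_besselCoeff (lam c t z : ℝ) :
    Summable fun j : ℕ => besselCoeff lam c t j * z ^ j := by
  have h := (summable_bessel_series ((lam / (2 * c)) ^ 2 * z)).mul_left
    (lam * c * t * (lam / (2 * c)))
  refine h.congr fun j => ?_
  rw [besselCoeff, mul_pow, pow_succ _ (2 * j), pow_mul]
  ring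

lemma hasSum_besselI1 (y : ℝ) :
    HasSum (fun j : ℕ => (y / 2) ^ (2 * j + 1) /
      ((j.factorial : ℝ) * ((j + 1).factorial : ℝ))) (besselI1 y) := by
  refine Summable.hasSum ?_
  refine ((summable_bessel_series ((y / 2) ^ 2)).mul_left (y / 2)).congr fun j => ?_
  rw [pow_succ _ (2 * j), pow_mul]
  ring

/-- Positivity of `c²t² - x²` matters: the quotient on the right is `0` where it vanishes. -/
lemma hasSum_besselI1_div_sqrt {lam c t x : ℝ} (h : 0 < c ^ 2 * t ^ 2 - x ^ 2) :
    HasSum (fun j : ℕ => besselCoeff lam c t j * ((c * t) ^ 2 - x ^ 2) ^ j)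
      (lam * c * t * besselI1 (lam / c * √(c ^ 2 * t ^ 2 - x ^ 2)) /
        √(c ^ 2 * t ^ 2 - x ^ 2)) := by
  have hs : 0 < √(c ^ 2 * t ^ 2 - x ^ 2) := Real.sqrt_pos.2 h
  have hs2 : √(c ^ 2 * t ^ 2 - x ^ 2) ^ 2 = (c * t) ^ 2 - x ^ 2 := by
    rw [Real.sq_sqrt h.le]; ring
  have key := ((hasSum_besselI1 (lam / c * √(c ^ 2 * t ^ 2 - x ^ 2))).mul_left
    (lam * c * t)).div_const (√(c ^ 2 * t ^ 2 - x ^ 2))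
  refine (congrArg (fun f : ℕ → ℝ => HasSum f _) (funext fun j => ?_)).mpr key
  rw [← hs2, besselCoeff,
    show lam / c * √(c ^ 2 * t ^ 2 - x ^ 2) / 2 = lam / (2 * c) * √(c ^ 2 * t ^ 2 - x ^ 2) by ring,
    mul_pow, pow_succ (√_) (2 * j), pow_mul (√_)]
  field_simp

lemma hasSum_expTerm (k x : ℝ) :
    HasSum (fun m => expTerm k m x) (Complex.exp (Complex.I * k * x)) := by
  have h1 := Complex.hasSum_ofReal.2 (Real.hasSum_cos (k * x))
  have h2 := (Complex.hasSum_ofReal.2 (Real.hasSum_sin (k * x))).mul_left Complex.I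
  have h := h1.add h2
  have e : Complex.exp (Complex.I * k * x) =
      ((Real.cos (k * x) : ℝ) : ℂ) + Complex.I * ((Real.sin (k * x) : ℝ) : ℂ) := by
    rw [show Complex.I * k * x = ((k * x : ℝ) : ℂ) * Complex.I by push_cast; ring,
      Complex.exp_mul_I, Complex.ofReal_cos, Complex.ofReal_sin]
    ring
  rw [e]
  exact h

lemma norm_expTerm_le {k a x : ℝ} (hx : |x| ≤ a) (m : ℕ) :
    ‖expTerm k m x‖ ≤ (|k| * a) ^ (2 * m) / ((2 * m).factorial : ℝ) +
      (|k| * a) ^ (2 * m + 1) / ((2 * m + 1).factorial : ℝ) := by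
  refine (norm_add_le _ _).trans ?_
  rw [norm_mul, Complex.norm_I, one_mul, Complex.norm_real, Complex.norm_real]
  simp only [norm_div, norm_mul, norm_pow, norm_neg, norm_one, one_pow, one_mul,
    RCLike.norm_natCast, Real.norm_eq_abs]
  gcongr

/-- Induction on `j` for all `m` at once, through
`x^{2m} (a²-x²)^{j+1} = a² x^{2m} (a²-x²)^j - x^{2(m+1)} (a²-x²)^j`. -/
lemma integral_even_pow_mul (a : ℝ) (j : ℕ) : ∀ m : ℕ,
    ∫ x in (-a)..a, x ^ (2 * m) * (a ^ 2 - x ^ 2) ^ j =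
      a ^ (2 * m + 2 * j + 1) * 2 ^ (2 * j + 2) * (j.factorial : ℝ) * ((2 * m).factorial : ℝ) *
        ((m + j + 1).factorial : ℝ) /
        ((m.factorial : ℝ) * ((2 * m + 2 * j + 2).factorial : ℝ)) := by
  induction j with
  | zero =>
    intro m
    simp only [pow_zero, mul_one, integral_pow, mul_zero, add_zero, zero_add,
      Nat.factorial_succ, Nat.factorial_zero]
    rw [Odd.neg_pow ⟨m, rfl⟩]
    push_cast
    field_simp
    ring
  | succ j ih =>
    intro m
    have e : ∀ x : ℝ, x ^ (2 * m) * (a ^ 2 - x ^ 2) ^ (j + 1) =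
        a ^ 2 * (x ^ (2 * m) * (a ^ 2 - x ^ 2) ^ j) -
          x ^ (2 * (m + 1)) * (a ^ 2 - x ^ 2) ^ j := fun x => by ring
    simp_rw [e]
    rw [intervalIntegral.integral_sub
      (Continuous.intervalIntegrable (by fun_prop) _ _)
      (Continuous.intervalIntegrable (by fun_prop) _ _),
      intervalIntegral.integral_const_mul, ih, ih]
    rw [show 2 * (m + 1) + 2 * j + 2 = 2 * m + 2 * j + 2 + 1 + 1 by ring,
      show 2 * m + 2 * (j + 1) + 2 = 2 * m + 2 * j + 2 + 1 + 1 by ring,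
      show m + 1 + j + 1 = m + j + 1 + 1 by ring,
      show m + (j + 1) + 1 = m + j + 1 + 1 by ring,
      show 2 * (m + 1) = 2 * m + 1 + 1 by ring,
      Nat.factorial_succ (2 * m + 2 * j + 2 + 1), Nat.factorial_succ (2 * m + 2 * j + 2),
      Nat.factorial_succ (m + j + 1), Nat.factorial_succ (2 * m + 1), Nat.factorial_succ (2 * m),
      Nat.factorial_succ m, Nat.factorial_succ j]
    push_cast
    field_simp
    ring

lemma integral_odd_pow_mul (a : ℝ) (j m : ℕ) :
    ∫ x in (-a)..a, x ^ (2 * m + 1) * (a ^ 2 - x ^ 2) ^ j = 0 := by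
  have h := intervalIntegral.integral_comp_neg (a := -a) (b := a)
    (fun x : ℝ => x ^ (2 * m + 1) * (a ^ 2 - x ^ 2) ^ j)
  simp only [neg_sq, neg_neg, Odd.neg_pow (⟨m, rfl⟩ : Odd (2 * m + 1)), neg_mul,
    intervalIntegral.integral_neg] at h
  linarith

lemma integral_term (lam c t k : ℝ) (p : ℕ × ℕ) :
    ∫ x in (-(c * t))..(c * t),
      expTerm k p.2 x * ((besselCoeff lam c t p.1 * ((c * t) ^ 2 - x ^ 2) ^ p.1 : ℝ) : ℂ) =
      (intTerm lam c t k p : ℂ) := by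
  obtain ⟨j, m⟩ := p
  have e : ∀ x : ℝ, expTerm k m x *
      ((besselCoeff lam c t j * ((c * t) ^ 2 - x ^ 2) ^ j : ℝ) : ℂ) =
      ((besselCoeff lam c t j * ((-1) ^ m * k ^ (2 * m) / ((2 * m).factorial : ℝ)) *
        (x ^ (2 * m) * ((c * t) ^ 2 - x ^ 2) ^ j) : ℝ) : ℂ) + Complex.I *
      ((besselCoeff lam c t j * ((-1) ^ m * k ^ (2 * m + 1) / ((2 * m + 1).factorial : ℝ)) *
        (x ^ (2 * m + 1) * ((c * t) ^ 2 - x ^ 2) ^ j) : ℝ) : ℂ) := fun x => by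
    rw [expTerm, mul_pow, mul_pow]
    push_cast
    ring
  simp_rw [e]
  rw [intervalIntegral.integral_add
    (Continuous.intervalIntegrable (by fun_prop) _ _)
    (Continuous.intervalIntegrable (by fun_prop) _ _),
    intervalIntegral.integral_const_mul, intervalIntegral.integral_ofReal,
    intervalIntegral.integral_ofReal, intervalIntegral.integral_const_mul,
    intervalIntegral.integral_const_mul, integral_odd_pow_mul]
  simp [intTerm]

lemma hasSum_integral {lam c t : ℝ} (k : ℝ) (hlam : 0 < lam) (hc : 0 < c) (ht : 0 < t) :
    HasSum (fun p : ℕ × ℕ => (intTerm lam c t k p : ℂ))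
      (∫ x in (-(c * t))..(c * t), Complex.exp (Complex.I * k * x) *
          ((lam * c * t * besselI1 (lam / c * √(c ^ 2 * t ^ 2 - x ^ 2)) /
              √(c ^ 2 * t ^ 2 - x ^ 2) : ℝ) : ℂ)) := by
  have ha : 0 < c * t := mul_pos hc ht
  have hA : ∀ j, 0 ≤ besselCoeff lam c t j := fun j => by unfold besselCoeff; positivity
  set u : ℕ → ℝ := fun m => (|k| * (c * t)) ^ (2 * m) / ((2 * m).factorial : ℝ) +
      (|k| * (c * t)) ^ (2 * m + 1) / ((2 * m + 1).factorial : ℝ) with hu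
  have hu0 : ∀ m, 0 ≤ u m := fun m => by rw [hu]; positivity
  have hus : Summable u := by
    have h := Real.summable_pow_div_factorial (|k| * (c * t))
    exact (h.comp_injective (i := fun m : ℕ => 2 * m) fun x y hxy => by simpa using hxy).add
      (h.comp_injective (i := fun m : ℕ => 2 * m + 1) fun x y hxy => by simpa using hxy)
  set v : ℕ → ℝ := fun j => besselCoeff lam c t j * ((c * t) ^ 2) ^ j with hv
  have hv0 : ∀ j, 0 ≤ v j := fun j => mul_nonneg (hA j) (by positivity)
  have hvs : Summable v := summable_besselCoeff lam c t _
  have hbs : Summable fun p : ℕ × ℕ => v p.1 * u p.2 :=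
    hvs.mul_of_nonneg hus hv0 hu0
  -- Pointwise domination of the double series by constants.
  have hbound : ∀ (p : ℕ × ℕ) (x : ℝ), |x| ≤ c * t →
      ‖expTerm k p.2 x * ((besselCoeff lam c t p.1 * ((c * t) ^ 2 - x ^ 2) ^ p.1 : ℝ) : ℂ)‖ ≤
        v p.1 * u p.2 := by
    intro p x hx
    have hx2 : x ^ 2 ≤ (c * t) ^ 2 := sq_le_sq' (abs_le.1 hx).1 (abs_le.1 hx).2
    have h1 : ‖((besselCoeff lam c t p.1 * ((c * t) ^ 2 - x ^ 2) ^ p.1 : ℝ) : ℂ)‖ ≤ v p.1 := by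
      rw [Complex.norm_real, Real.norm_eq_abs, abs_of_nonneg
        (mul_nonneg (hA _) (pow_nonneg (by linarith) _))]
      exact mul_le_mul_of_nonneg_left
        (pow_le_pow_left₀ (by linarith) (by linarith [sq_nonneg x]) _) (hA _)
    rw [norm_mul, mul_comm]
    exact mul_le_mul h1 (norm_expTerm_le hx _) (norm_nonneg _) (hv0 _)
  have hIoc : Set.uIoc (-(c * t)) (c * t) = Set.Ioc (-(c * t)) (c * t) :=
    Set.uIoc_of_le (by linarith)
  have key := intervalIntegral.hasSum_integral_of_dominated_convergence
    (μ := volume) (a := -(c * t)) (b := c * t)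
    (F := fun (p : ℕ × ℕ) (x : ℝ) =>
      expTerm k p.2 x * ((besselCoeff lam c t p.1 * ((c * t) ^ 2 - x ^ 2) ^ p.1 : ℝ) : ℂ))
    (f := fun x : ℝ => Complex.exp (Complex.I * k * x) *
          ((lam * c * t * besselI1 (lam / c * √(c ^ 2 * t ^ 2 - x ^ 2)) /
              √(c ^ 2 * t ^ 2 - x ^ 2) : ℝ) : ℂ))
    (fun p _ => v p.1 * u p.2)
    (fun p => Continuous.aestronglyMeasurable (by unfold expTerm; fun_prop))
    (fun p => Filter.Eventually.of_forall fun x hx => hbound p x (by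
      rw [hIoc] at hx
      exact abs_le.2 ⟨hx.1.le, hx.2⟩))
    (Filter.Eventually.of_forall fun x _ => hbs)
    intervalIntegrable_const ?_
  · simpa only [integral_term] using key
  -- The endpoint `c * t` is discarded, since the quotient takes the junk value `0` there.
  · filter_upwards [Measure.ae_ne volume (c * t)] with x hne hx
    rw [hIoc] at hx
    have hlt : x < c * t := lt_of_le_of_ne hx.2 hne
    have hpos : 0 < c ^ 2 * t ^ 2 - x ^ 2 := by nlinarith [hx.1]
    have hB := Complex.hasSum_ofReal.2 (hasSum_besselI1_div_sqrt (lam := lam) hpos)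
    have hsum : Summable fun p : ℕ × ℕ =>
        ((besselCoeff lam c t p.1 * ((c * t) ^ 2 - x ^ 2) ^ p.1 : ℝ) : ℂ) * expTerm k p.2 x := by
      refine Summable.of_norm_bounded hbs fun p => ?_
      rw [mul_comm]
      exact hbound p x (abs_le.2 ⟨hx.1.le, hx.2⟩)
    have h := hB.mul (hasSum_expTerm k x) hsum
    simpa only [mul_comm] using h

/-- The `m = n + 1`, `j = -1` term of the binomial expansion is absent on the left, which is why
`(c²k²)^{n+1}` is subtracted. -/
lemma sum_antidiagonal_term {lam c t k : ℝ} (hc : c ≠ 0) (n : ℕ) :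
    ∑ p ∈ Finset.HasAntidiagonal.antidiagonal n, intTerm lam c t k p =
      2 * c * ((-1) ^ (n + 1) * t ^ (2 * (n + 1)) / ((2 * (n + 1)).factorial : ℝ)) *
        ((c ^ 2 * k ^ 2 - lam ^ 2) ^ (n + 1) - (c ^ 2 * k ^ 2) ^ (n + 1)) := by
  have hb : (c ^ 2 * k ^ 2 - lam ^ 2) ^ (n + 1) - (c ^ 2 * k ^ 2) ^ (n + 1) =
      ∑ p ∈ Finset.HasAntidiagonal.antidiagonal n,
        ((n + 1).choose (p.1 + 1) : ℝ) * ((-lam ^ 2) ^ (p.1 + 1) * (c ^ 2 * k ^ 2) ^ p.2) := by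
    rw [show c ^ 2 * k ^ 2 - lam ^ 2 = -lam ^ 2 + c ^ 2 * k ^ 2 by ring,
      (Commute.all _ _).add_pow', Finset.Nat.sum_antidiagonal_succ]
    simp
  rw [hb, Finset.mul_sum]
  refine Finset.sum_congr rfl fun p hp => ?_
  obtain ⟨j, m⟩ := p
  rw [Finset.HasAntidiagonal.mem_antidiagonal] at hp
  simp only at hp
  subst hp
  have hch : ((j + m + 1).choose (j + 1) : ℝ) =
      ((m + j + 1).factorial : ℝ) / (((j + 1).factorial : ℝ) * (m.factorial : ℝ)) := by
    rw [show j + m + 1 = (j + 1) + m by ring, Nat.cast_add_choose,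
      show m + j + 1 = (j + 1) + m by ring]
  simp only [intTerm, integral_even_pow_mul, besselCoeff, hch]
  simp only [div_pow, mul_pow]
  rw [show 2 * (j + m + 1) = 2 * m + 2 * j + 2 by ring, neg_pow (lam ^ 2),
    show (-1 : ℝ) ^ (j + m + 1) = (-1) ^ (j + 1) * (-1) ^ m by ring]
  have hs : ((-1 : ℝ) ^ (j + 1)) * (-1) ^ (j + 1) = 1 := by
    rw [← mul_pow]; norm_num
  generalize (-1 : ℝ) ^ (j + 1) = s at *
  have hs' : s ^ 2 = 1 := by rw [sq, hs]
  field_simp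
  rw [hs']
  ring

/-- For `λ, c, t > 0` and `c·k > λ`,
`∫_{−ct}^{ct} e^{ikx}·λct·I₁((λ/c)√(c²t²−x²))/√(c²t²−x²) dx
  = 2c·[cos(t√(c²k²−λ²)) − cos(kct)]`. -/
theorem circular_telegraph_fourier_I1
    (lam c t k : ℝ) (hlam : 0 < lam) (hc : 0 < c) (ht : 0 < t) (hk : c * k > lam) :
    ∫ x in (-(c * t))..(c * t),
        Complex.exp (Complex.I * k * x) *
          ((lam * c * t * besselI1 (lam / c * Real.sqrt (c ^ 2 * t ^ 2 - x ^ 2)) /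
              Real.sqrt (c ^ 2 * t ^ 2 - x ^ 2) : ℝ) : ℂ)
      = ((2 * c * (Real.cos (t * Real.sqrt (c ^ 2 * k ^ 2 - lam ^ 2)) -
            Real.cos (k * c * t)) : ℝ) : ℂ) := by
  have h1 := hasSum_integral k hlam hc ht
  rw [← Finset.HasAntidiagonal.sigmaAntidiagonalEquivProd.hasSum_iff] at h1
  have h2 := h1.sigma fun n => hasSum_fintype _
  refine h2.unique ?_
  have hpos : 0 ≤ c ^ 2 * k ^ 2 - lam ^ 2 := by nlinarith
  have hcos := ((Real.hasSum_cos (t * √(c ^ 2 * k ^ 2 - lam ^ 2))).sub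
    (Real.hasSum_cos (k * c * t))).mul_left (2 * c)
  -- The constant terms of the two cosine series cancel.
  have hshift := (hasSum_nat_add_iff' 1).2 hcos
  simp only [Finset.sum_range_one, mul_zero, pow_zero, sub_self, sub_zero] at hshift
  have h3 := Complex.hasSum_ofReal.2 hshift
  convert h3 using 2 with n
  refine (Finset.sum_coe_sort (Finset.HasAntidiagonal.antidiagonal n)
    (fun p => (intTerm lam c t k p : ℂ))).trans ?_
  rw [← Complex.ofReal_sum, sum_antidiagonal_term hc.ne', mul_pow t, pow_mul (√_),
    Real.sq_sqrt hpos, show k * c * t = t * (c * k) by ring, mul_pow t, pow_mul (c * k), mul_pow c]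
  congr 1
  ring
end

section
/- Let λ, c, s > 0, let k be a natural number with c·k > λ, and let v ∈ {−c, c} with sgn(v) = ±1 accordingly. Then: (1) ∫_0^∞ e^{−(λ+s)t}·[ e^{ikvt} + cos(t√(c²k²−λ²)) + i·sgn(v)·ck·sin(t√(c²k²−λ²))/√(c²k²−λ²) − (1+sgn(v))·cos(kct) ] dt = −sgn(v)/(λ + s + ikc) + (λ + s + ikv)/(s² + 2λs + c²k²), and (2) ∫_0^∞ e^{−(λ+s)t}·λ·sin(t√(c²k²−λ²))/√(c²k²−λ²) dt = λ/(s² + 2λs + c²k²); the integrals on the left are complex-valued integrals over (0,∞). -/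
open MeasureTheory Real

/-!
Everything reduces to the one-sided Laplace transform of `t ↦ exp (i w t)` at `p = lam + s > 0`,
which is `1 / (p - i w)`. Euler's formulas then give the transforms `p / (p² + w²)` and
`w / (p² + w²)` of cosine and sine. With `w = √(c²k² - lam²)`, which is positive because
`c k > lam`, the denominator `p² + w²` is `s² + 2 lam s + c²k²`. Finally, for both signs of `v`,
`exp (i k v t) - (1 + sgn v) cos (k c t) = -sgn v * exp (-i k c t)`, which accounts for the
remaining term `-sgn v / (lam + s + i k c)`.
-/

lemma laplace_exp (p w : ℝ) (hp : 0 < p) :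
    IntegrableOn (fun t : ℝ => Complex.exp (-((p * t : ℝ) : ℂ)) * Complex.exp (Complex.I * w * t))
      (Set.Ioi 0) ∧
    ∫ t in Set.Ioi (0 : ℝ), Complex.exp (-((p * t : ℝ) : ℂ)) * Complex.exp (Complex.I * w * t)
      = 1 / (p - Complex.I * w) := by
  have ha : (-(p : ℂ) + Complex.I * w).re < 0 := by simpa using hp
  have hf : (fun t : ℝ => Complex.exp (-((p * t : ℝ) : ℂ)) * Complex.exp (Complex.I * w * t))
      = fun t : ℝ => Complex.exp ((-(p : ℂ) + Complex.I * w) * t) := by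
    funext t
    rw [← Complex.exp_add]
    congr 1
    push_cast
    ring
  rw [hf]
  refine ⟨integrableOn_exp_mul_complex_Ioi ha 0, ?_⟩
  rw [integral_exp_mul_complex_Ioi ha 0]
  have h : (p : ℂ) - Complex.I * w = -(-(p : ℂ) + Complex.I * w) := by ring
  rw [h, Complex.ofReal_zero, mul_zero, Complex.exp_zero, div_neg, neg_div]

lemma sub_I_mul_ne_zero (p w : ℝ) (hp : 0 < p) : (p : ℂ) - Complex.I * w ≠ 0 := by
  intro h
  have := congrArg Complex.re h
  simp at this
  exact hp.ne' this

lemma laplace_cos (p w : ℝ) (hp : 0 < p) :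
    IntegrableOn (fun t : ℝ => Complex.exp (-((p * t : ℝ) : ℂ)) * (Real.cos (t * w) : ℂ))
      (Set.Ioi 0) ∧
    ∫ t in Set.Ioi (0 : ℝ), Complex.exp (-((p * t : ℝ) : ℂ)) * (Real.cos (t * w) : ℂ)
      = p / ((p ^ 2 + w ^ 2 : ℝ) : ℂ) := by
  obtain ⟨i₁, e₁⟩ := laplace_exp p w hp
  obtain ⟨i₂, e₂⟩ := laplace_exp p (-w) hp
  have hf : (fun t : ℝ => Complex.exp (-((p * t : ℝ) : ℂ)) * (Real.cos (t * w) : ℂ))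
      = fun t : ℝ => (1 / 2 : ℂ) *
        (Complex.exp (-((p * t : ℝ) : ℂ)) * Complex.exp (Complex.I * w * t)
        + Complex.exp (-((p * t : ℝ) : ℂ)) * Complex.exp (Complex.I * (-w : ℝ) * t)) := by
    funext t
    rw [Complex.ofReal_cos, Complex.cos]
    have h₁ : ((t * w : ℝ) : ℂ) * Complex.I = Complex.I * w * t := by push_cast; ring
    have h₂ : -((t * w : ℝ) : ℂ) * Complex.I = Complex.I * (-w : ℝ) * t := by push_cast; ring
    rw [h₁, h₂]
    ring
  rw [hf]
  refine ⟨(i₁.add i₂).const_mul _, ?_⟩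
  rw [integral_const_mul, integral_add i₁ i₂, e₁, e₂]
  have n₁ := sub_I_mul_ne_zero p w hp
  have n₂ := sub_I_mul_ne_zero p (-w) hp
  have hd : ((p ^ 2 + w ^ 2 : ℝ) : ℂ) = (p - Complex.I * w) * (p - Complex.I * (-w : ℝ)) := by
    push_cast
    linear_combination (w : ℂ) ^ 2 * Complex.I_sq
  rw [hd, div_add_div _ _ n₁ n₂, mul_div_assoc']
  congr 1
  push_cast
  ring

lemma laplace_sin (p w : ℝ) (hp : 0 < p) :
    IntegrableOn (fun t : ℝ => Complex.exp (-((p * t : ℝ) : ℂ)) * (Real.sin (t * w) : ℂ))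
      (Set.Ioi 0) ∧
    ∫ t in Set.Ioi (0 : ℝ), Complex.exp (-((p * t : ℝ) : ℂ)) * (Real.sin (t * w) : ℂ)
      = w / ((p ^ 2 + w ^ 2 : ℝ) : ℂ) := by
  obtain ⟨i₁, e₁⟩ := laplace_exp p w hp
  obtain ⟨i₂, e₂⟩ := laplace_exp p (-w) hp
  have hf : (fun t : ℝ => Complex.exp (-((p * t : ℝ) : ℂ)) * (Real.sin (t * w) : ℂ))
      = fun t : ℝ => (-Complex.I / 2 : ℂ) *
        (Complex.exp (-((p * t : ℝ) : ℂ)) * Complex.exp (Complex.I * w * t)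
        - Complex.exp (-((p * t : ℝ) : ℂ)) * Complex.exp (Complex.I * (-w : ℝ) * t)) := by
    funext t
    rw [Complex.ofReal_sin, Complex.sin]
    have h₁ : ((t * w : ℝ) : ℂ) * Complex.I = Complex.I * w * t := by push_cast; ring
    have h₂ : -((t * w : ℝ) : ℂ) * Complex.I = Complex.I * (-w : ℝ) * t := by push_cast; ring
    rw [h₁, h₂]
    ring
  rw [hf]
  refine ⟨(i₁.sub i₂).const_mul _, ?_⟩
  rw [integral_const_mul, integral_sub i₁ i₂, e₁, e₂]
  have n₁ := sub_I_mul_ne_zero p w hp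
  have n₂ := sub_I_mul_ne_zero p (-w) hp
  have hd : ((p ^ 2 + w ^ 2 : ℝ) : ℂ) = (p - Complex.I * w) * (p - Complex.I * (-w : ℝ)) := by
    push_cast
    linear_combination (w : ℂ) ^ 2 * Complex.I_sq
  rw [hd, div_sub_div _ _ n₁ n₂, mul_div_assoc']
  congr 1
  push_cast
  linear_combination (-(w : ℂ)) * Complex.I_sq

/-- The non-telegraph part of the integrand collapses to one exponential, for either sign. -/
lemma exp_sub_cos (c k v sgnv t : ℝ) (h : (v = c ∧ sgnv = 1) ∨ (v = -c ∧ sgnv = -1)) :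
    Complex.exp (Complex.I * k * v * t) - ((1 + sgnv) * Real.cos (k * c * t) : ℝ)
      = -(sgnv : ℂ) * Complex.exp (Complex.I * (-(k * c) : ℝ) * t) := by
  rcases h with ⟨rfl, rfl⟩ | ⟨rfl, rfl⟩
  · rw [Complex.ofReal_mul, Complex.ofReal_cos, Complex.cos]
    have h₁ : ((k * v * t : ℝ) : ℂ) * Complex.I = Complex.I * k * v * t := by push_cast; ring
    have h₂ : -((k * v * t : ℝ) : ℂ) * Complex.I = Complex.I * (-(k * v) : ℝ) * t := by
      push_cast; ring
    rw [h₁, h₂]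
    push_cast
    ring
  · have h₁ : Complex.I * k * (-c : ℝ) * t = Complex.I * (-(k * c) : ℝ) * t := by
      push_cast; ring
    rw [h₁]
    simp

/-- Laplace transforms of the coefficient functions in the power-series representation of
the circular telegraph semigroup, giving the coefficients of the resolvent. -/
theorem resolvent_coefficients_laplace
    (lam c s : ℝ) (hlam : 0 < lam) (hc : 0 < c) (hs : 0 < s)
    (k : ℕ) (hk : c * k > lam)
    (v : ℝ) (hv : v = c ∨ v = -c)
    (sgnv : ℝ) (hsgn : sgnv = if v = c then 1 else -1) :
    (∫ t in Set.Ioi (0 : ℝ),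
        Complex.exp (-(((lam + s) * t : ℝ) : ℂ)) *
          (Complex.exp (Complex.I * k * v * t)
            + Real.cos (t * Real.sqrt (c ^ 2 * k ^ 2 - lam ^ 2))
            + Complex.I * sgnv * (c * k) *
                (Real.sin (t * Real.sqrt (c ^ 2 * k ^ 2 - lam ^ 2)) /
                  Real.sqrt (c ^ 2 * k ^ 2 - lam ^ 2) : ℝ)
            - ((1 + sgnv) * Real.cos (k * c * t) : ℝ))
      = -(sgnv : ℂ) / (lam + s + Complex.I * k * c)
          + ((lam + s : ℝ) + Complex.I * k * v) /
              ((s ^ 2 + 2 * lam * s + c ^ 2 * k ^ 2 : ℝ) : ℂ))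
    ∧
    (∫ t in Set.Ioi (0 : ℝ),
        Complex.exp (-(((lam + s) * t : ℝ) : ℂ)) *
          ((lam * Real.sin (t * Real.sqrt (c ^ 2 * k ^ 2 - lam ^ 2)) /
              Real.sqrt (c ^ 2 * k ^ 2 - lam ^ 2) : ℝ) : ℂ)
      = ((lam / (s ^ 2 + 2 * lam * s + c ^ 2 * k ^ 2) : ℝ) : ℂ)) := by
  have hp : 0 < lam + s := add_pos hlam hs
  have hw : 0 < c ^ 2 * (k : ℝ) ^ 2 - lam ^ 2 := by nlinarith
  have hw' := Real.sqrt_pos.mpr hw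
  have hsq := Real.sq_sqrt hw.le
  set w := Real.sqrt (c ^ 2 * (k : ℝ) ^ 2 - lam ^ 2) with hwdef
  have hden : (lam + s) ^ 2 + w ^ 2 = s ^ 2 + 2 * lam * s + c ^ 2 * (k : ℝ) ^ 2 := by
    rw [hsq]; ring
  have hwC : (w : ℂ) ≠ 0 := by exact_mod_cast hw'.ne'
  have hsign : (v = c ∧ sgnv = 1) ∨ (v = -c ∧ sgnv = -1) := by
    rcases hv with h | h
    · exact Or.inl ⟨h, by rw [hsgn, if_pos h]⟩
    · exact Or.inr ⟨h, by rw [hsgn, if_neg (by rw [h]; linarith)]⟩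
  have hsv : sgnv * c = v := by
    rcases hsign with ⟨h₁, h₂⟩ | ⟨h₁, h₂⟩ <;> rw [h₁, h₂] <;> ring
  obtain ⟨iE, eE⟩ := laplace_exp (lam + s) (-(k * c)) hp
  obtain ⟨iC, eC⟩ := laplace_cos (lam + s) w hp
  obtain ⟨iS, eS⟩ := laplace_sin (lam + s) w hp
  rw [hden] at eC eS
  constructor
  · have hf : ∀ t : ℝ, Complex.exp (-(((lam + s) * t : ℝ) : ℂ)) *
          (Complex.exp (Complex.I * k * v * t) + Real.cos (t * w)
            + Complex.I * sgnv * (c * k) * (Real.sin (t * w) / w : ℝ)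
            - ((1 + sgnv) * Real.cos (k * c * t) : ℝ))
        = -(sgnv : ℂ) * (Complex.exp (-(((lam + s) * t : ℝ) : ℂ)) *
              Complex.exp (Complex.I * (-(k * c) : ℝ) * t))
          + Complex.exp (-(((lam + s) * t : ℝ) : ℂ)) * (Real.cos (t * w) : ℂ)
          + (Complex.I * k * v / w) *
            (Complex.exp (-(((lam + s) * t : ℝ) : ℂ)) * (Real.sin (t * w) : ℂ)) := by
      intro t
      have h := exp_sub_cos c k v sgnv t hsign
      rw [Complex.ofReal_natCast] at h
      have hsv' : (sgnv : ℂ) * c = v := by exact_mod_cast hsv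
      rw [Complex.ofReal_div, ← hsv']
      rw [← hsv'] at h
      linear_combination Complex.exp (-(((lam + s) * t : ℝ) : ℂ)) * h
    simp_rw [hf]
    rw [integral_add ((iE.const_mul _).fun_add iC) (iS.const_mul _),
      integral_add (iE.const_mul _) iC, integral_const_mul, integral_const_mul, eE, eC, eS,
      mul_one_div, div_mul_div_cancel₀ hwC, add_assoc, ← add_div]
    congr 2
    push_cast
    ring
  · have hf : ∀ t : ℝ, Complex.exp (-(((lam + s) * t : ℝ) : ℂ)) *
          ((lam * Real.sin (t * w) / w : ℝ) : ℂ)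
        = (lam / w : ℂ) *
            (Complex.exp (-(((lam + s) * t : ℝ) : ℂ)) * (Real.sin (t * w) : ℂ)) := by
      intro t
      rw [Complex.ofReal_div, Complex.ofReal_mul lam]
      ring
    simp_rw [hf]
    rw [integral_const_mul, eS, Complex.ofReal_div]
    field_simp
end

section
/- Let λ, c > 0 and let D ⊆ ℂ be an open set. Let u₁, u₂ : ℝ × D → ℂ be such that, for each fixed t, z ↦ u_j(t,z) is complex-differentiable on D with complex derivative u_j'(t,z); for each fixed z, t ↦ u_j(t,z) is twice differentiable; the mixed partial derivatives of w := (u₁ − u₂)/2 commute, i.e. ∂/∂t (∂w/∂z) = ∂/∂z (∂w/∂t); and p := (u₁ + u₂)/2 is twice differentiable in z. Suppose the coupled system holds on ℝ × D: ∂u₁/∂t(t,z) = i z c·u₁'(t,z) + λ(u₂(t,z) − u₁(t,z)) and ∂u₂/∂t(t,z) = −i z c·u₂'(t,z) + λ(u₁(t,z) − u₂(t,z)). Then p satisfies the complex telegraph equation ∂²p/∂t²(t,z) + 2λ·∂p/∂t(t,z) = −c²·( z²·∂²p/∂z²(t,z) + z·∂p/∂z(t,z) ) for all (t,z) ∈ ℝ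 × D. -/
/-!
With `p = (u₁ + u₂)/2` and `w = (u₁ − u₂)/2`, half the sum and half the difference of the two
equations turn the system into `∂p/∂t = izc · ∂w/∂z` and `∂w/∂t = izc · ∂p/∂z − 2λw`.
Differentiating the first in `t` and the second in `z` produces the same mixed partial of `w`;
eliminating it, and replacing `izc · ∂w/∂z` by `∂p/∂t`, gives the telegraph equation.
-/

open Complex

/-- If `u₁, u₂` solve the coupled first-order system
`∂u₁/∂t = izc·u₁' + λ(u₂ − u₁)`, `∂u₂/∂t = −izc·u₂' + λ(u₁ − u₂)` on `ℝ × D`,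
and the relevant second derivatives exist (with the mixed partials of
`w = (u₁−u₂)/2` commuting), then `p = (u₁+u₂)/2` solves the complex telegraph
equation `∂²p/∂t² + 2λ·∂p/∂t = −c²(z²·p'' + z·p')`. -/
theorem complex_telegraph_equation
    (lam c : ℝ) (hlam : 0 < lam) (hc : 0 < c)
    (D : Set ℂ) (hD : IsOpen D)
    (u₁ u₂ : ℝ → ℂ → ℂ)
    -- complex derivatives in z
    (u₁' u₂' : ℝ → ℂ → ℂ)
    (hu₁' : ∀ t : ℝ, ∀ z ∈ D, HasDerivAt (u₁ t) (u₁' t z) z)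
    (hu₂' : ∀ t : ℝ, ∀ z ∈ D, HasDerivAt (u₂ t) (u₂' t z) z)
    -- time derivatives
    (du₁ du₂ : ℝ → ℂ → ℂ)
    (hdu₁ : ∀ t : ℝ, ∀ z ∈ D, HasDerivAt (fun s : ℝ => u₁ s z) (du₁ t z) t)
    (hdu₂ : ∀ t : ℝ, ∀ z ∈ D, HasDerivAt (fun s : ℝ => u₂ s z) (du₂ t z) t)
    -- second time derivative of p = (u₁+u₂)/2
    (ptt : ℝ → ℂ → ℂ)
    (hptt : ∀ t : ℝ, ∀ z ∈ D,
      HasDerivAt (fun s : ℝ => (du₁ s z + du₂ s z) / 2) (ptt t z) t)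
    -- second z-derivative of p
    (pzz : ℝ → ℂ → ℂ)
    (hpzz : ∀ t : ℝ, ∀ z ∈ D,
      HasDerivAt (fun y : ℂ => (u₁' t y + u₂' t y) / 2) (pzz t z) z)
    -- the mixed partial derivatives of w = (u₁−u₂)/2 exist and commute:
    -- `m = ∂/∂t (∂w/∂z) = ∂/∂z (∂w/∂t)`
    (m : ℝ → ℂ → ℂ)
    (hm₁ : ∀ t : ℝ, ∀ z ∈ D,
      HasDerivAt (fun s : ℝ => (u₁' s z - u₂' s z) / 2) (m t z) t)
    (hm₂ : ∀ t : ℝ, ∀ z ∈ D,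
      HasDerivAt (fun y : ℂ => (du₁ t y - du₂ t y) / 2) (m t z) z)
    -- the coupled system
    (hsys₁ : ∀ t : ℝ, ∀ z ∈ D,
      du₁ t z = Complex.I * z * c * u₁' t z + lam * (u₂ t z - u₁ t z))
    (hsys₂ : ∀ t : ℝ, ∀ z ∈ D,
      du₂ t z = -(Complex.I * z * c) * u₂' t z + lam * (u₁ t z - u₂ t z)) :
    ∀ t : ℝ, ∀ z ∈ D,
      ptt t z + 2 * lam * ((du₁ t z + du₂ t z) / 2)
        = -(c : ℂ) ^ 2 * (z ^ 2 * pzz t z + z * ((u₁' t z + u₂' t z) / 2)) := by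
  intro t z hz
  -- `∂²p/∂t² = izc · m`, by differentiating `∂p/∂t = izc · ∂w/∂z` in time
  have h_ptt : ptt t z = Complex.I * z * c * m t z := by
    refine (hptt t z hz).unique
      (((hm₁ t z hz).const_mul (Complex.I * z * c)).congr_of_eventuallyEq
        (Filter.Eventually.of_forall fun s => ?_))
    simp only [hsys₁ s z hz, hsys₂ s z hz]
    ring
  -- `m = ic · ∂p/∂z + izc · ∂²p/∂z² − 2λ · ∂w/∂z`, by differentiating
  -- `∂w/∂t = izc · ∂p/∂z − 2λw` in `z`; that identity holds near `z` because `D` is open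
  have h_m : m t z = Complex.I * c * ((u₁' t z + u₂' t z) / 2)
      + Complex.I * z * c * pzz t z + lam * (u₂' t z - u₁' t z) := by
    have h₁ := (((hasDerivAt_id z).const_mul (Complex.I * c)).mul (hpzz t z hz)).add
      (((hu₂' t z hz).sub (hu₁' t z hz)).const_mul (lam : ℂ))
    have h₂ := h₁.congr_of_eventuallyEq (f₁ := fun y => (du₁ t y - du₂ t y) / 2) (by
      filter_upwards [hD.mem_nhds hz] with y hy
      simp only [Pi.add_apply, Pi.mul_apply, Pi.sub_apply, id_eq, hsys₁ t y hy, hsys₂ t y hy]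
      ring)
    rw [(hm₂ t z hz).unique h₂]
    simp only [id_eq]
    ring
  rw [h_ptt, h_m, hsys₁ t z hz, hsys₂ t z hz]
  linear_combination (c : ℂ) ^ 2 * (z ^ 2 * pzz t z + z * ((u₁' t z + u₂' t z) / 2)) * Complex.I_sq
end

section
/- Let λ, c > 0 with λ/c not a positive integer, and t > 0. Let p_{Z,t} be the pushforward of the telegraph law p_t under the quotient map ℝ → ℝ/2πℤ (the additive circle of period 2π). For each integer k ≥ 1 define φ_k(t) := e^{−λt}·[ cos(t√(k²c²−λ²)) + λ·sin(t√(k²c²−λ²))/√(k²c²−λ²) ] if kc > λ, and φ_k(t) := e^{−λt}·[ cosh(t√(λ²−k²c²)) + λ·sinh(t√(λ²−k²c²))/√(λ²−k²c²) ] if kc < λ. Then for every Borel set A ⊆ ℝ/2πℤ whose topological boundary has p_{Z,t}-measure zero: p_{Z,t}(A) = lim_{r→1⁻} ∫_A (1/(2π))·( 1 + 2·∑_{k=1}^∞ φ_k(t)·r^k·cos(kθ) ) dθ, where the integral is with respect to the Haar (Lebesgue) measure of total mass 2π on ℝ/2πℤ and θ ↦ cos(kθ) denotes the well-defined lift of the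 2π-periodic function cos(k·) to the circle. -/
/-!
The statement combines two independent facts.

*Characteristic function.* Up to the factor `λe^{-λt}/2`, the density of the telegraph law is a
combination of two power series in `c²t² - x²`. Multiplying by the power series of `cos(ξx)` and
integrating termwise produces Beta integrals `∫ (R² - x²)^k x^{2m} dx`, for which each antidiagonal
`k + m = n` of the double series is a binomial expansion
(`integral_profile_zero`, `integral_profile_one`). Together with the two atoms this gives
`∫ cos(ξx) dp_t = e^{-λt}(C + λtS)` with `C = ∑ uⁿ/(2n)!`, `S = ∑ uⁿ/(2n+1)!`,
`u = t²(λ² - ξ²c²)` (`integral_cos_telegraphLaw`). Specializing `ξ = 0` shows that `p_t` has mass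
one; specializing `ξ = k` gives `φ_k(t)`, trigonometric or hyperbolic according to the sign of `u`.
By symmetry of `p_t` these are the Fourier coefficients of the wrapped law.

*Abel inversion.* For any probability measure `P` on a circle with characteristic function `ψ`, the
Abel sum `∑ r^|n| ψ(n) e₋ₙ` is the convolution of `P` with the Poisson kernel, hence nonnegative
(`abelSum_eq_integral`). It is thus the density of a probability measure with characteristic function
`r^|n| ψ(n)`, which tends to `ψ(n)` as `r → 1⁻`. Since trigonometric polynomials are dense in the
continuous functions, these measures converge weakly to `P` (`tendsto_of_fourier`), and the
portmanteau theorem gives convergence on every set with `P`-null boundary (`abel_tendsto`).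
-/

open MeasureTheory Real Filter

/-- The density `μ(x,t)` of the absolutely continuous part of the telegraph law. -/
noncomputable def telegraphDensity (lam c x t : ℝ) : ℝ :=
  lam * Real.exp (-lam * t) / 2 *
    ((1 / c) * besselI0 (lam / c * Real.sqrt (c ^ 2 * t ^ 2 - x ^ 2)) +
      t * besselI1 (lam / c * Real.sqrt (c ^ 2 * t ^ 2 - x ^ 2)) /
        Real.sqrt (c ^ 2 * t ^ 2 - x ^ 2))

/-- The law of the telegraph process:
`p_t = (e^{−λt}/2)(δ_{−ct} + δ_{ct}) + μ(·,t)·1_{(−ct,ct)}·Leb`. -/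
noncomputable def telegraphLaw (lam c t : ℝ) : MeasureTheory.Measure ℝ :=
  ENNReal.ofReal (Real.exp (-lam * t) / 2) •
      (MeasureTheory.Measure.dirac (-(c * t)) + MeasureTheory.Measure.dirac (c * t)) +
    MeasureTheory.volume.withDensity fun x =>
      ENNReal.ofReal
        (Set.indicator (Set.Ioo (-(c * t)) (c * t)) (fun y => telegraphDensity lam c y t) x)

instance : Fact (0 < 2 * Real.pi) := ⟨by positivity⟩

/-! ### Abel summation on the circle -/

theorem abel_summable_aux {r : ℝ} (h0 : 0 < r) (h1 : r < 1) :
    Summable fun n : ℤ => r ^ n.natAbs := by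
  apply Summable.of_nat_of_neg <;> simpa using summable_geometric_of_lt_one h0.le h1

theorem norm_fourier_apply {T : ℝ} (n : ℤ) (x : AddCircle T) : ‖fourier n x‖ = 1 := by
  rw [fourier_apply]; exact Circle.norm_coe _

/-- The series `∑ₙ r^|n| eₙ(x)` is the Poisson kernel. The closed form matters only because it
is visibly nonnegative. -/
theorem poisson_hasSum {T r : ℝ} (h0 : 0 < r) (h1 : r < 1) (x : AddCircle T) :
    HasSum (fun n : ℤ => ((r ^ n.natAbs : ℝ) : ℂ) * fourier n x)
      (((1 - r ^ 2) / Complex.normSq (1 - r * fourier 1 x) : ℝ) : ℂ) := by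
  set w : ℂ := fourier 1 x with hw
  have hn : ∀ n : ℕ, fourier (n : ℤ) x = w ^ n := by
    intro n
    rw [hw, fourier_apply, fourier_apply, natCast_zsmul, one_zsmul, AddCircle.toCircle_nsmul]
    simp
  have hnorm : ‖w‖ = 1 := norm_fourier_apply 1 x
  have hww : w * (starRingEnd ℂ) w = 1 := by
    rw [Complex.mul_conj, Complex.normSq_eq_norm_sq, hnorm]; norm_num
  have hz : ‖(r : ℂ) * w‖ < 1 := by
    rw [norm_mul, hnorm]; simpa [abs_of_pos h0] using h1
  have hz' : ‖(r : ℂ) * (starRingEnd ℂ) w‖ < 1 := by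
    rw [norm_mul, RCLike.norm_conj, hnorm]; simpa [abs_of_pos h0] using h1
  have s1 := hasSum_geometric_of_norm_lt_one hz
  have s2 := (hasSum_geometric_of_norm_lt_one hz').mul_left ((r : ℂ) * (starRingEnd ℂ) w)
  have key := HasSum.of_nat_of_neg_add_one
    (f := fun n : ℤ => ((r ^ n.natAbs : ℝ) : ℂ) * fourier n x)
    (m := (1 - (r : ℂ) * w)⁻¹)
    (m' := (r : ℂ) * (starRingEnd ℂ) w * (1 - (r : ℂ) * (starRingEnd ℂ) w)⁻¹)
    (by
      refine s1.congr_fun ?_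
      intro n
      simp only [hn, Int.natAbs_natCast, mul_pow]; push_cast; ring)
    (by
      refine s2.congr_fun ?_
      intro n
      have : ((n : ℤ) + 1) = ((n + 1 : ℕ) : ℤ) := by push_cast; ring
      rw [this, Int.natAbs_neg, Int.natAbs_natCast, fourier_neg, hn]
      simp only [map_pow]; push_cast; ring)
  convert key using 1
  have e1 : (1 - (r : ℂ) * w) ≠ 0 := by
    intro h
    have : (r : ℂ) * w = 1 := (sub_eq_zero.mp h).symm
    rw [this] at hz; simp at hz
  have e2 : (1 - (r : ℂ) * (starRingEnd ℂ) w) ≠ 0 := by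
    intro h
    have : (r : ℂ) * (starRingEnd ℂ) w = 1 := (sub_eq_zero.mp h).symm
    rw [this] at hz'; simp at hz'
  push_cast
  rw [← Complex.mul_conj]
  simp only [map_sub, map_one, map_mul, Complex.conj_ofReal]
  field_simp
  linear_combination (r : ℂ) ^ 2 * hww

/-- The Abel sum `∑ₙ r^|n| ψ(n) e₋ₙ` of the Fourier series with coefficients `ψ`, as a continuous
function on the circle; meaningful for bounded `ψ` and `0 < r < 1`. The sign `e₋ₙ` fits the
convention `ψ(n) = ∫ eₙ dP` of characteristic functions, which is opposite to that of
`fourierCoeff`. -/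
noncomputable def abelSum {T : ℝ} [Fact (0 < T)] (ψ : ℤ → ℂ) (r : ℝ) : C(AddCircle T, ℂ) :=
  ∑' n : ℤ, (((r ^ n.natAbs : ℝ) : ℂ) * ψ n) • fourier (-n)

section
variable {T : ℝ} [hT : Fact (0 < T)]

theorem abelSum_hasSum {ψ : ℤ → ℂ} (hψ : ∀ n, ‖ψ n‖ ≤ 1) {r : ℝ} (h0 : 0 < r) (h1 : r < 1) :
    HasSum (fun n : ℤ => (((r ^ n.natAbs : ℝ) : ℂ) * ψ n) • fourier (T := T) (-n))
      (abelSum ψ r) := by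
  refine Summable.hasSum (Summable.of_norm_bounded (abel_summable_aux h0 h1) fun n => ?_)
  rw [norm_smul, fourier_norm, mul_one, norm_mul, Complex.norm_real, Real.norm_eq_abs,
    abs_of_pos (pow_pos h0 _)]
  exact mul_le_of_le_one_right (pow_pos h0 _).le (hψ n)

/-- As a density with respect to Haar probability measure, the Abel sum has characteristic
function `m ↦ r^|m| ψ(m)`. -/
theorem integral_fourier_mul_abelSum {ψ : ℤ → ℂ} (hψ : ∀ n, ‖ψ n‖ ≤ 1) {r : ℝ} (h0 : 0 < r)
    (h1 : r < 1) (m : ℤ) :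
    ∫ θ, fourier m θ * abelSum ψ r θ ∂(AddCircle.haarAddCircle (T := T)) =
      ((r ^ m.natAbs : ℝ) : ℂ) * ψ m := by
  have h := abelSum_hasSum (T := T) hψ h0 h1
  have key := hasSum_integral_of_summable_integral_norm
    (μ := AddCircle.haarAddCircle (T := T))
    (F := fun n : ℤ => fun θ => fourier m θ * ((((r ^ n.natAbs : ℝ) : ℂ) * ψ n) • fourier (-n) θ))
    (fun n => (Continuous.integrable_of_hasCompactSupport (by fun_prop)
      (HasCompactSupport.of_compactSpace _))) (by
      refine Summable.of_nonneg_of_le (fun n => integral_nonneg fun _ => norm_nonneg _) (fun n => ?_)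
        (abel_summable_aux h0 h1)
      calc _ ≤ ∫ θ, r ^ n.natAbs ∂(AddCircle.haarAddCircle (T := T)) := by
            refine integral_mono_of_nonneg (ae_of_all _ fun _ => norm_nonneg _)
              (integrable_const _) (ae_of_all _ fun θ => ?_)
            simp only [norm_mul, norm_smul, norm_fourier_apply, one_mul, mul_one,
              Complex.norm_real, Real.norm_eq_abs, abs_of_pos (pow_pos h0 _)]
            exact mul_le_of_le_one_right (pow_pos h0 _).le (hψ n)
        _ = _ := by simp)
  have e : ∀ θ : AddCircle T, ∑' n : ℤ, fourier m θ * ((((r ^ n.natAbs : ℝ) : ℂ) * ψ n) • fourier (-n) θ)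
      = fourier m θ * abelSum ψ r θ := fun θ =>
    ((ContinuousMap.hasSum_apply h θ).mul_left _).tsum_eq
  simp only [e] at key
  refine key.unique ?_
  have : ∀ n : ℤ, ∫ θ, fourier m θ * ((((r ^ n.natAbs : ℝ) : ℂ) * ψ n) • fourier (-n) θ)
      ∂(AddCircle.haarAddCircle (T := T)) = if n = m then ((r ^ m.natAbs : ℝ) : ℂ) * ψ m else 0 := by
    intro n
    have hf := congrFun (fourierCoeff_fourier (T := T) m) n
    simp only [fourierCoeff, smul_eq_mul] at hf
    have : ∀ θ : AddCircle T, fourier m θ * ((((r ^ n.natAbs : ℝ) : ℂ) * ψ n) • fourier (-n) θ)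
      = (((r ^ n.natAbs : ℝ) : ℂ) * ψ n) * (fourier (-n) θ * fourier m θ) := by
      intro θ; rw [smul_eq_mul]; ring
    simp only [this]
    rw [integral_const_mul, hf]
    by_cases hnm : n = m
    · subst hnm; simp
    · simp [hnm]
  simp only [this]
  exact hasSum_ite_eq m _

/-- The Abel sum of the characteristic function of `P` is the convolution of `P` with the Poisson
kernel; in particular it is real and nonnegative. -/
theorem abelSum_eq_integral (P : Measure (AddCircle T)) [IsProbabilityMeasure P] {r : ℝ}
    (h0 : 0 < r) (h1 : r < 1) (θ : AddCircle T) :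
    abelSum (fun n => ∫ y, fourier n y ∂P) r θ =
      ((∫ y, (1 - r ^ 2) / Complex.normSq (1 - r * fourier 1 (y - θ)) ∂P : ℝ) : ℂ) := by
  have hψ : ∀ n : ℤ, ‖∫ y, fourier n y ∂P‖ ≤ 1 := fun n => by
    refine (norm_integral_le_integral_norm _).trans ?_
    simp [-fourier_apply, norm_fourier_apply]
  have h := ContinuousMap.hasSum_apply (abelSum_hasSum (T := T) hψ h0 h1) θ
  have key := hasSum_integral_of_summable_integral_norm (μ := P)
    (F := fun n : ℤ => fun y => ((r ^ n.natAbs : ℝ) : ℂ) * fourier n (y - θ))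
    (fun n => (Continuous.integrable_of_hasCompactSupport (by fun_prop)
      (HasCompactSupport.of_compactSpace _))) (by
      simpa [-fourier_apply, norm_fourier_apply, abs_of_pos h0] using abel_summable_aux h0 h1)
  simp only [(poisson_hasSum h0 h1 _).tsum_eq] at key
  rw [integral_complex_ofReal] at key
  refine h.unique (key.congr_fun fun n => ?_)
  have : ∀ y : AddCircle T, fourier n (y - θ) = fourier n y * fourier (-n) θ := by
    intro y; simp [fourier_apply, sub_eq_add_neg, AddCircle.toCircle_add, smul_add]
  simp only [this, integral_const_mul, integral_mul_const]
  simp [mul_assoc]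

/-- Lévy's continuity theorem on the circle: pointwise convergence of characteristic functions
implies weak convergence, because trigonometric polynomials are uniformly dense. -/
theorem tendsto_of_fourier {ι : Type*} {L : Filter ι} {ν : ι → ProbabilityMeasure (AddCircle T)}
    {P : ProbabilityMeasure (AddCircle T)}
    (h : ∀ n : ℤ, Tendsto (fun i => ∫ y, fourier n y ∂(ν i : Measure (AddCircle T))) L
      (nhds (∫ y, fourier n y ∂(P : Measure (AddCircle T))))) :
    Tendsto ν L (nhds P) := by
  have hint : ∀ (μ : ProbabilityMeasure (AddCircle T)) (g : C(AddCircle T, ℂ)),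
      Integrable g (μ : Measure (AddCircle T)) := fun μ g =>
    Continuous.integrable_of_hasCompactSupport g.continuous (HasCompactSupport.of_compactSpace _)
  have hspan : ∀ g ∈ Submodule.span ℂ (Set.range (@fourier T)),
      Tendsto (fun i => ∫ y, g y ∂(ν i : Measure (AddCircle T))) L
      (nhds (∫ y, g y ∂(P : Measure (AddCircle T)))) := by
    intro g hg
    induction hg using Submodule.span_induction with
    | mem x hx => obtain ⟨n, rfl⟩ := hx; exact h n
    | zero => simpa using tendsto_const_nhds
    | add x y _ _ hx hy =>
      simp only [ContinuousMap.add_apply]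
      simp_rw [integral_add (hint _ x) (hint _ y)]
      exact hx.add hy
    | smul a x _ hx =>
      simp only [ContinuousMap.smul_apply, integral_smul]
      exact hx.const_smul a
  rw [ProbabilityMeasure.tendsto_iff_forall_integral_rclike_tendsto ℂ]
  intro f
  rw [Metric.tendsto_nhds]
  intro ε hε
  have hf : f.toContinuousMap ∈ (Submodule.span ℂ (Set.range (@fourier T))).topologicalClosure := by
    rw [span_fourier_closure_eq_top]; trivial
  obtain ⟨g, hg, hfg⟩ := Metric.mem_closure_iff.mp hf (ε / 3) (by positivity)
  have hd : ∀ μ : ProbabilityMeasure (AddCircle T),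
      ‖∫ y, f y ∂(μ : Measure (AddCircle T)) - ∫ y, g y ∂(μ : Measure (AddCircle T))‖ ≤ ε / 3 := by
    intro μ
    have hfi : Integrable (fun y => f y) (μ : Measure (AddCircle T)) := hint μ f.toContinuousMap
    rw [← integral_sub hfi (hint μ g)]
    have := norm_integral_le_of_norm_le_const (μ := (μ : Measure (AddCircle T)))
      (f := fun y => f y - g y) (C := ε / 3) (ae_of_all _ fun y => by
        rw [← dist_eq_norm]
        exact (ContinuousMap.dist_apply_le_dist (f := f.toContinuousMap) (g := g) y).trans hfg.le)
    simpa using this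
  filter_upwards [Metric.tendsto_nhds.mp (hspan g hg) (ε / 3) (by positivity)] with i hi
  rw [dist_eq_norm] at hi ⊢
  have a1 := hd (ν i)
  have a2 := hd P
  rw [norm_sub_rev] at a2
  set X := ∫ y, f y ∂(ν i : Measure (AddCircle T))
  set Y := ∫ y, f y ∂(P : Measure (AddCircle T))
  set X' := ∫ y, g y ∂(ν i : Measure (AddCircle T))
  set Y' := ∫ y, g y ∂(P : Measure (AddCircle T))
  calc ‖X - Y‖ = ‖(X - X') + (X' - Y') + (Y' - Y)‖ := by congr 1; ring
    _ ≤ ‖X - X'‖ + ‖X' - Y'‖ + ‖Y' - Y‖ := norm_add₃_le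
    _ < ε := by linarith

/-- Abel inversion for an arbitrary probability measure on the circle: the Abel means, viewed as
densities, converge weakly to `P`, and the portmanteau theorem applies to `P`-continuity sets. -/
theorem abel_tendsto (P : Measure (AddCircle T)) [IsProbabilityMeasure P]
    {A : Set (AddCircle T)} (hA : MeasurableSet A) (hbd : P (frontier A) = 0) :
    Tendsto (fun r : ℝ => ∫ θ in A, (abelSum (fun n => ∫ y, fourier n y ∂P) r θ).re
      ∂(AddCircle.haarAddCircle (T := T))) (nhdsWithin 1 (Set.Iio 1)) (nhds (P A).toReal) := by
  set ψ : ℤ → ℂ := fun n => ∫ y, fourier n y ∂P with hψdef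
  have hψ : ∀ n : ℤ, ‖ψ n‖ ≤ 1 := fun n => by
    refine (norm_integral_le_integral_norm _).trans ?_
    simp [-fourier_apply, norm_fourier_apply]
  -- Outside `(0, 1)` the Abel sum need not converge, so `ν r` is an arbitrary probability measure
  -- there; only `r → 1⁻` matters.
  have hν : ∀ r : ℝ, ∃ ν : ProbabilityMeasure (AddCircle T), 0 < r → r < 1 →
      (((ν : Measure (AddCircle T)) A).toReal =
        ∫ θ in A, (abelSum ψ r θ).re ∂(AddCircle.haarAddCircle (T := T))) ∧
      ∀ n : ℤ, ∫ y, fourier n y ∂(ν : Measure (AddCircle T)) = ((r ^ n.natAbs : ℝ) : ℂ) * ψ n := by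
    intro r
    by_cases hr : 0 < r ∧ r < 1
    swap
    · exact ⟨⟨P, inferInstance⟩, fun h0 h1 => absurd ⟨h0, h1⟩ hr⟩
    obtain ⟨h0, h1⟩ := hr
    have hre : ∀ θ : AddCircle T, abelSum ψ r θ = ((abelSum ψ r θ).re : ℂ) := by
      intro θ; rw [hψdef, abelSum_eq_integral P h0 h1]; simp
    have hnn : ∀ θ : AddCircle T, 0 ≤ (abelSum ψ r θ).re := by
      intro θ; rw [hψdef, abelSum_eq_integral P h0 h1, Complex.ofReal_re]
      refine integral_nonneg fun y => div_nonneg ?_ (Complex.normSq_nonneg _)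
      nlinarith
    have hcont : Continuous fun θ => (abelSum (T := T) ψ r θ).re := by fun_prop
    have hint : Integrable (fun θ => (abelSum (T := T) ψ r θ).re) AddCircle.haarAddCircle :=
      Continuous.integrable_of_hasCompactSupport hcont (HasCompactSupport.of_compactSpace _)
    set N : Measure (AddCircle T) := AddCircle.haarAddCircle.withDensity
      fun θ => ENNReal.ofReal (abelSum (T := T) ψ r θ).re with hN
    have hNf : ∀ n : ℤ, ∫ y, fourier (T := T) n y ∂N = ((r ^ n.natAbs : ℝ) : ℂ) * ψ n := by
      intro n
      rw [hN, integral_withDensity_eq_integral_toReal_smul (by fun_prop) (ae_of_all _ (by simp)),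
        ← integral_fourier_mul_abelSum (T := T) hψ h0 h1 n]
      congr 1 with θ
      rw [ENNReal.toReal_ofReal (hnn θ), Complex.real_smul, ← hre, mul_comm]
    have hNA : ∀ B, MeasurableSet B → N B = ENNReal.ofReal
        (∫ θ in B, (abelSum ψ r θ).re ∂(AddCircle.haarAddCircle (T := T))) := by
      intro B hB
      rw [hN, withDensity_apply _ hB, ofReal_integral_eq_lintegral_ofReal hint.integrableOn
        (ae_of_all _ hnn)]
    have hfin : IsFiniteMeasure N := ⟨by rw [hNA _ MeasurableSet.univ]; exact ENNReal.ofReal_lt_top⟩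
    have hprob : IsProbabilityMeasure N := by
      constructor
      -- The total mass is the characteristic function at `0`.
      have h := hNf 0
      simp only [fourier_zero, hψdef] at h
      simp only [integral_const, probReal_univ] at h
      have h' : N.real Set.univ = 1 := by
        have := congrArg Complex.re h
        simpa using this
      rw [Measure.real] at h'
      exact (ENNReal.toReal_eq_one_iff _).mp h'
    refine ⟨⟨N, hprob⟩, fun _ _ => ⟨?_, hNf⟩⟩
    show (N A).toReal = _
    rw [hNA _ hA, ENNReal.toReal_ofReal (integral_nonneg hnn)]
  choose ν hν using hν
  have hmem : ∀ᶠ r : ℝ in nhdsWithin 1 (Set.Iio 1), 0 < r ∧ r < 1 := by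
    filter_upwards [self_mem_nhdsWithin, mem_nhdsWithin_of_mem_nhds (lt_mem_nhds zero_lt_one)]
      with r h1 h0 using ⟨h0, h1⟩
  have hw : Tendsto ν (nhdsWithin 1 (Set.Iio 1)) (nhds ⟨P, inferInstance⟩) := by
    apply tendsto_of_fourier
    intro n
    have : Tendsto (fun r : ℝ => ((r ^ n.natAbs : ℝ) : ℂ) * ψ n) (nhdsWithin 1 (Set.Iio 1))
        (nhds (ψ n)) := by
      have hc : Continuous fun r : ℝ => ((r ^ n.natAbs : ℝ) : ℂ) * ψ n := by fun_prop
      have := hc.tendsto 1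
      simp only [one_pow, Complex.ofReal_one, one_mul] at this
      exact this.mono_left nhdsWithin_le_nhds
    refine this.congr' ?_
    filter_upwards [hmem] with r hr using ((hν r hr.1 hr.2).2 n).symm
  have := ProbabilityMeasure.tendsto_measure_of_null_frontier_of_tendsto' hw (E := A) hbd
  have := (ENNReal.tendsto_toReal (measure_ne_top P A)).comp this
  refine this.congr' ?_
  filter_upwards [hmem] with r hr using (hν r hr.1 hr.2).1
end

/-! ### Cosine transforms of Bessel series -/

/-- `∫_{-R}^{R} (R² - x²)^k x^{2m} dx`, an instance of the Beta integral. Integration by parts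
lowers `k` by one and raises `m` by one. -/
theorem betaIntegral_formula {R : ℝ} (k m : ℕ) :
    ∫ x in (-R)..R, (R ^ 2 - x ^ 2) ^ k * x ^ (2 * m) =
      2 * 4 ^ k * (k.factorial : ℝ) * ((k + m).factorial : ℝ) * ((2 * m).factorial : ℝ) /
        ((m.factorial : ℝ) * ((2 * (k + m) + 1).factorial : ℝ)) * R ^ (2 * (k + m) + 1) := by
  induction k generalizing m with
  | zero =>
    have h1 : (m.factorial : ℝ) ≠ 0 := by positivity
    have h2 : ((2 * m).factorial : ℝ) ≠ 0 := by positivity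
    simp only [pow_zero, one_mul, integral_pow, zero_add, Nat.factorial_zero, Nat.factorial_succ]
    push_cast
    rw [Odd.neg_pow (by exact ⟨m, rfl⟩)]
    field_simp
    ring
  | succ k ih =>
    have hparts : ∫ x in (-R)..R, (R ^ 2 - x ^ 2) ^ (k + 1) * x ^ (2 * m) =
        2 * (k + 1) / (2 * m + 1) * ∫ x in (-R)..R, (R ^ 2 - x ^ 2) ^ k * x ^ (2 * (m + 1)) := by
      have hm : (2 * (m : ℝ) + 1) ≠ 0 := by positivity
      rw [intervalIntegral.integral_mul_deriv_eq_deriv_mul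
        (u := fun x : ℝ => (R ^ 2 - x ^ 2) ^ (k + 1))
        (u' := fun x => ((k + 1 : ℕ) : ℝ) * (R ^ 2 - x ^ 2) ^ k * (-(2 * x)))
        (v := fun x => x ^ (2 * m + 1) / (2 * m + 1)) (v' := fun x => x ^ (2 * m))]
      · rw [← intervalIntegral.integral_const_mul]
        simp only [even_two.neg_pow, sub_self, zero_pow (Nat.succ_ne_zero k), zero_mul, zero_sub]
        rw [← intervalIntegral.integral_neg]
        congr 1 with x
        push_cast
        field_simp
        ring
      · intro x _
        have := (((hasDerivAt_pow 2 x).const_sub (R ^ 2)).pow (k + 1))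
        refine this.congr_deriv ?_
        simp
      · intro x _
        have := (hasDerivAt_pow (2 * m + 1) x).div_const (2 * (m : ℝ) + 1)
        convert this using 1
        push_cast
        field_simp
      · exact Continuous.intervalIntegrable (by fun_prop) _ _
      · exact Continuous.intervalIntegrable (by fun_prop) _ _
    rw [hparts, ih (m + 1)]
    have e1 : k + 1 + m = k + (m + 1) := by ring
    have e2 : 2 * (m + 1) = 2 * m + 1 + 1 := by ring
    rw [e1, e2]
    simp only [Nat.factorial_succ k, Nat.factorial_succ m, Nat.factorial_succ (2 * m + 1),
      Nat.factorial_succ (2 * m)]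
    have h1 : (m.factorial : ℝ) ≠ 0 := by positivity
    have h2 : ((2 * (k + (m + 1)) + 1).factorial : ℝ) ≠ 0 := by positivity
    push_cast
    field_simp
    ring

/-- The power series `∑ₖ w k (a y)^k`. With `a = (λ/2c)²`, `y = c²t² - x²` and weights `1/(k!)²` or
`1/(k!(k+1)!)` it gives the two Bessel terms of the telegraph density, written without square roots
(`I₁(z)/z` is half of the second series at `(z/2)²`). -/
noncomputable def besselProfile (w : ℕ → ℝ) (a y : ℝ) : ℝ := ∑' k : ℕ, w k * (a * y) ^ k

theorem profile_bound {w : ℕ → ℝ} (hw0 : ∀ k, 0 ≤ w k) (hw : ∀ k, w k ≤ 1 / (k.factorial : ℝ))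
    {a y Y : ℝ} (ha : 0 ≤ a) (hy : 0 ≤ y) (hY : y ≤ Y) (k : ℕ) :
    ‖w k * (a * y) ^ k‖ ≤ (a * Y) ^ k / (k.factorial : ℝ) := by
  rw [Real.norm_eq_abs, abs_of_nonneg (mul_nonneg (hw0 k) (by positivity)), div_eq_mul_one_div,
    mul_comm]
  gcongr
  · exact hw0 k
  · exact pow_nonneg (mul_nonneg ha (hy.trans hY)) _
  · exact hw k

theorem profile_hasSum {w : ℕ → ℝ} (hw0 : ∀ k, 0 ≤ w k) (hw : ∀ k, w k ≤ 1 / (k.factorial : ℝ))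
    {a y : ℝ} (ha : 0 ≤ a) (hy : 0 ≤ y) :
    HasSum (fun k => w k * (a * y) ^ k) (besselProfile w a y) :=
  (Summable.of_norm_bounded (Real.summable_pow_div_factorial (a * y))
    (profile_bound hw0 hw ha hy le_rfl)).hasSum

theorem hasSum_mul_of_eq {f g : ℕ → ℝ} {F : ℕ × ℕ → ℝ} {s u : ℝ} (hf : HasSum f s)
    (hg : HasSum g u) (hF : ∀ p, F p = f p.1 * g p.2) (hs : Summable F) : HasSum F (s * u) := by
  obtain rfl : F = fun p => f p.1 * g p.2 := funext hF
  exact hf.mul hg hs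

/-- The cosine transform of `x ↦ besselProfile w a (R² - x²)` as a double series, obtained by
expanding both factors and integrating termwise under the domination
`(aR²)^k/k! · (ξR)^{2m}/m!`. -/
theorem profile_integral_hasSum {w : ℕ → ℝ} (hw0 : ∀ k, 0 ≤ w k)
    (hw : ∀ k, w k ≤ 1 / (k.factorial : ℝ)) {a R : ℝ} (ha : 0 ≤ a) (hR : 0 ≤ R) (ξ : ℝ) :
    HasSum (fun p : ℕ × ℕ => w p.1 * a ^ p.1 * ((-1) ^ p.2 * ξ ^ (2 * p.2) / ((2 * p.2).factorial : ℝ)) *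
      ∫ x in (-R)..R, (R ^ 2 - x ^ 2) ^ p.1 * x ^ (2 * p.2))
      (∫ x in (-R)..R, besselProfile w a (R ^ 2 - x ^ 2) * cos (ξ * x)) := by
  have hsum : Summable fun p : ℕ × ℕ =>
      (a * R ^ 2) ^ p.1 / (p.1.factorial : ℝ) * (((ξ * R) ^ 2) ^ p.2 / (p.2.factorial : ℝ)) :=
    (Real.summable_pow_div_factorial (a * R ^ 2)).mul_of_nonneg
      (Real.summable_pow_div_factorial ((ξ * R) ^ 2)) (fun k => by positivity)
      (fun k => by positivity)
  have hmem : ∀ x ∈ Set.uIoc (-R) R, 0 ≤ R ^ 2 - x ^ 2 ∧ |x| ≤ R := by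
    intro x hx
    rw [Set.uIoc_of_le (by linarith)] at hx
    have : |x| ≤ R := abs_le.mpr ⟨hx.1.le, hx.2⟩
    exact ⟨by nlinarith [sq_abs x, abs_nonneg x], this⟩
  set F : ℕ × ℕ → ℝ → ℝ := fun p x => (w p.1 * (a * (R ^ 2 - x ^ 2)) ^ p.1) *
      ((-1) ^ p.2 * (ξ * x) ^ (2 * p.2) / ((2 * p.2).factorial : ℝ)) with hF
  have hmeas : ∀ p, AEStronglyMeasurable (F p) (volume.restrict (Set.uIoc (-R) R)) := fun p =>
    Continuous.aestronglyMeasurable (by fun_prop)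
  have hbound : ∀ p, ∀ x ∈ Set.uIoc (-R) R, ‖F p x‖ ≤
      (a * R ^ 2) ^ p.1 / (p.1.factorial : ℝ) * (((ξ * R) ^ 2) ^ p.2 / (p.2.factorial : ℝ)) := by
    intro p x hx
    obtain ⟨h1, h2⟩ := hmem x hx
    rw [hF, norm_mul]
    refine mul_le_mul (profile_bound hw0 hw ha h1 (by nlinarith [sq_nonneg x]) p.1) ?_
      (norm_nonneg _) (by positivity)
    rw [norm_div, norm_mul, norm_pow, norm_neg, norm_one, one_pow, one_mul, pow_mul, norm_pow,
      Real.norm_of_nonneg (sq_nonneg (ξ * x)),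
      Real.norm_of_nonneg (Nat.cast_nonneg (2 * p.2).factorial)]
    have h3 : (ξ * x) ^ 2 ≤ (ξ * R) ^ 2 := by
      rw [mul_pow, mul_pow]
      exact mul_le_mul_of_nonneg_left (sq_le_sq' (abs_le.mp h2).1 (abs_le.mp h2).2)
        (sq_nonneg _)
    have h4 : (p.2.factorial : ℝ) ≤ ((2 * p.2).factorial : ℝ) := by
      exact_mod_cast Nat.factorial_le (by omega)
    exact div_le_div₀ (by positivity) (pow_le_pow_left₀ (sq_nonneg _) h3 _) (by positivity) h4
  have hlim : ∀ x ∈ Set.uIoc (-R) R,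
      HasSum (fun p => F p x) (besselProfile w a (R ^ 2 - x ^ 2) * cos (ξ * x)) := by
    intro x hx
    obtain ⟨h1, h2⟩ := hmem x hx
    have s1 := profile_hasSum hw0 hw ha h1
    have s2 := Real.hasSum_cos (ξ * x)
    have s3 : Summable fun p => F p x := Summable.of_norm_bounded hsum fun p => hbound p x hx
    exact hasSum_mul_of_eq s1 s2 (fun p => by rw [hF]) s3
  have key := intervalIntegral.hasSum_integral_of_dominated_convergence (μ := volume) (fun (p : ℕ × ℕ) (_ : ℝ) =>
      (a * R ^ 2) ^ p.1 / (p.1.factorial : ℝ) * (((ξ * R) ^ 2) ^ p.2 / (p.2.factorial : ℝ))) hmeas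
    (fun p => ae_of_all _ (hbound p)) (ae_of_all _ fun _ _ => hsum)
    (_root_.intervalIntegrable_const) (ae_of_all _ hlim)
  refine key.congr_fun fun p => ?_
  rw [← intervalIntegral.integral_const_mul]
  refine intervalIntegral.integral_congr fun x _ => ?_
  simp only [hF, mul_pow]
  ring

/-- Regrouping of a double series along antidiagonals. -/
theorem hasSum_antidiagonal {f : ℕ × ℕ → ℝ} {s : ℝ} (h : HasSum f s) :
    HasSum (fun n => ∑ p ∈ Finset.HasAntidiagonal.antidiagonal n, f p) s := by
  have h' := (Finset.HasAntidiagonal.sigmaAntidiagonalEquivProd (A := ℕ)).hasSum_iff.mpr h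
  refine h'.sigma fun n => ?_
  rw [← Finset.sum_coe_sort]
  exact hasSum_fintype _

theorem weight_zero_le (k : ℕ) : 1 / (k.factorial : ℝ) ^ 2 ≤ 1 / (k.factorial : ℝ) := by
  have : (1 : ℝ) ≤ k.factorial := by exact_mod_cast Nat.one_le_iff_ne_zero.mpr k.factorial_ne_zero
  gcongr
  nlinarith

theorem weight_one_le (k : ℕ) :
    1 / ((k.factorial : ℝ) * ((k + 1).factorial : ℝ)) ≤ 1 / (k.factorial : ℝ) := by
  have : (1 : ℝ) ≤ (k + 1).factorial := by
    exact_mod_cast Nat.one_le_iff_ne_zero.mpr (k + 1).factorial_ne_zero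
  have h' : (0 : ℝ) < k.factorial := by positivity
  gcongr
  nlinarith

/-- Cosine transform of the `I₀` term. After inserting the Beta integral, the antidiagonal
`k + m = n` of the double series is the binomial expansion of `(4aR² - ξ²R²)^n/(2n+1)!`, so `s` is
`sinh(z)/z` with `z² = 4aR² - ξ²R²` (`sin` in place of `sinh` if this is negative). -/
theorem integral_profile_zero {a R : ℝ} (ha : 0 ≤ a) (hR : 0 ≤ R) (ξ : ℝ) {s : ℝ}
    (hs : HasSum (fun n : ℕ => (4 * a * R ^ 2 - ξ ^ 2 * R ^ 2) ^ n / ((2 * n + 1).factorial : ℝ)) s) :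
    ∫ x in (-R)..R, besselProfile (fun k => 1 / (k.factorial : ℝ) ^ 2) a (R ^ 2 - x ^ 2) *
      cos (ξ * x) = 2 * R * s := by
  have h := hasSum_antidiagonal (profile_integral_hasSum (w := fun k => 1 / (k.factorial : ℝ) ^ 2)
    (fun k => by positivity) weight_zero_le ha hR ξ)
  refine h.unique ((hs.mul_left (2 * R)).congr_fun fun n => ?_)
  rw [sub_eq_add_neg, (Commute.all _ _).add_pow', Finset.sum_div, Finset.mul_sum]
  refine Finset.sum_congr rfl fun p hp => ?_
  obtain ⟨k, m⟩ := p
  obtain rfl : k + m = n := Finset.HasAntidiagonal.mem_antidiagonal.mp hp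
  dsimp only
  rw [betaIntegral_formula, Nat.choose_symm_add, Nat.add_choose, nsmul_eq_mul,
    Nat.cast_div (Nat.factorial_mul_factorial_dvd_factorial_add k m) (by positivity)]
  have h1 : (m.factorial : ℝ) ≠ 0 := by positivity
  have h2 : (k.factorial : ℝ) ≠ 0 := by positivity
  have h3 : ((2 * m).factorial : ℝ) ≠ 0 := by positivity
  have h4 : ((2 * (k + m) + 1).factorial : ℝ) ≠ 0 := by positivity
  push_cast
  rw [neg_pow (ξ ^ 2 * R ^ 2)]
  field_simp
  ring

/-- Cosine transform of the `I₁` term, where `s` is `cosh z` with `z² = 4aR² - ξ²R²`. The factor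
`4aR²` shifts the binomial expansion by one; the missing `k = 0` terms make up `cos(ξR)`, which the
atoms of the telegraph law later supply. -/
theorem integral_profile_one {a R : ℝ} (ha : 0 ≤ a) (hR : 0 ≤ R) (ξ : ℝ) {s : ℝ}
    (hs : HasSum (fun n : ℕ => (4 * a * R ^ 2 - ξ ^ 2 * R ^ 2) ^ n / ((2 * n).factorial : ℝ)) s) :
    (4 * a * R ^ 2) * ∫ x in (-R)..R,
      besselProfile (fun k => 1 / ((k.factorial : ℝ) * ((k + 1).factorial : ℝ))) a (R ^ 2 - x ^ 2) *
      cos (ξ * x) = 4 * R * (s - cos (ξ * R)) := by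
  have h := hasSum_antidiagonal (profile_integral_hasSum
    (w := fun k => 1 / ((k.factorial : ℝ) * ((k + 1).factorial : ℝ)))
    (fun k => by positivity) weight_one_le ha hR ξ)
  -- The `n = 0` terms of the series for `s` and `cos (ξ * R)` cancel, so the index can be shifted.
  have hd := hs.sub (Real.hasSum_cos (ξ * R))
  rw [← hasSum_nat_add_iff' 1] at hd
  simp only [Finset.range_one, Finset.sum_singleton, mul_zero, pow_zero, Nat.factorial_zero,
    Nat.cast_one, div_one, mul_one, sub_self, sub_zero] at hd
  refine (h.mul_left (4 * a * R ^ 2)).unique ((hd.mul_left (4 * R)).congr_fun fun n => ?_)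
  have hq : (-1 : ℝ) ^ (n + 1) * (ξ * R) ^ (2 * (n + 1)) = (-(ξ ^ 2 * R ^ 2)) ^ (n + 1) := by
    rw [pow_mul, neg_pow (ξ ^ 2 * R ^ 2), mul_pow ξ R 2]
  -- In the binomial sum of order `n + 1`, the `k = 0` term is the cosine term subtracted off.
  rw [hq, sub_eq_add_neg (4 * a * R ^ 2), (Commute.all _ _).add_pow',
    Finset.Nat.sum_antidiagonal_succ, ← sub_div]
  simp only [Nat.choose_zero_right, one_smul, pow_zero, one_mul, add_sub_cancel_left]
  rw [Finset.sum_div, Finset.mul_sum, Finset.mul_sum]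
  refine Finset.sum_congr rfl fun p hp => ?_
  obtain ⟨k, m⟩ := p
  obtain rfl : k + m = n := Finset.HasAntidiagonal.mem_antidiagonal.mp hp
  have e : k + m + 1 = (k + 1) + m := by ring
  have e2 : 2 * (k + m + 1) = 2 * (k + m) + 1 + 1 := by ring
  dsimp only
  rw [betaIntegral_formula, e2, e, Nat.choose_symm_add, Nat.add_choose, nsmul_eq_mul,
    Nat.cast_div (Nat.factorial_mul_factorial_dvd_factorial_add (k + 1) m) (by positivity),
    ← e, Nat.factorial_succ (2 * (k + m) + 1), Nat.factorial_succ (k + m), Nat.factorial_succ k]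
  have h1 : (m.factorial : ℝ) ≠ 0 := by positivity
  have h2 : (k.factorial : ℝ) ≠ 0 := by positivity
  have h3 : ((2 * m).factorial : ℝ) ≠ 0 := by positivity
  have h4 : ((2 * (k + m) + 1).factorial : ℝ) ≠ 0 := by positivity
  push_cast
  rw [neg_pow (ξ ^ 2 * R ^ 2)]
  field_simp
  ring

/-! ### The telegraph law and its characteristic function -/

/-- The telegraph density in a form free of square roots and of division by them, hence continuous
on the closed interval `[-ct, ct]`; it agrees with `telegraphDensity` on the open one. -/
noncomputable def smoothDensity (lam c t x : ℝ) : ℝ :=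
  lam * Real.exp (-lam * t) / 2 *
    ((1 / c) * besselProfile (fun k => 1 / (k.factorial : ℝ) ^ 2) ((lam / (2 * c)) ^ 2)
        ((c * t) ^ 2 - x ^ 2) +
      t * (lam / (2 * c)) *
        besselProfile (fun k => 1 / ((k.factorial : ℝ) * ((k + 1).factorial : ℝ)))
          ((lam / (2 * c)) ^ 2) ((c * t) ^ 2 - x ^ 2))

theorem profile_nonneg {w : ℕ → ℝ} (hw0 : ∀ k, 0 ≤ w k) {a y : ℝ} (ha : 0 ≤ a) (hy : 0 ≤ y) :
    0 ≤ besselProfile w a y :=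
  tsum_nonneg fun k => mul_nonneg (hw0 k) (by positivity)

theorem profile_continuousOn {w : ℕ → ℝ} (hw0 : ∀ k, 0 ≤ w k)
    (hw : ∀ k, w k ≤ 1 / (k.factorial : ℝ)) {a R : ℝ} (ha : 0 ≤ a) :
    ContinuousOn (fun x => besselProfile w a (R ^ 2 - x ^ 2)) (Set.Icc (-R) R) := by
  have hsum : Summable fun k : ℕ => (a * R ^ 2) ^ k / (k.factorial : ℝ) :=
    Real.summable_pow_div_factorial _
  have hcont : ∀ k, ContinuousOn (fun x => w k * (a * (R ^ 2 - x ^ 2)) ^ k) (Set.Icc (-R) R) :=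
    fun k => Continuous.continuousOn (by fun_prop)
  unfold besselProfile
  refine continuousOn_tsum hcont hsum fun k x hx => ?_
  have hy : 0 ≤ R ^ 2 - x ^ 2 := sub_nonneg.mpr (sq_le_sq' hx.1 hx.2)
  have hY : R ^ 2 - x ^ 2 ≤ R ^ 2 := sub_le_self _ (sq_nonneg x)
  exact profile_bound hw0 hw ha hy hY k

theorem smoothDensity_continuousOn (lam c t : ℝ) :
    ContinuousOn (smoothDensity lam c t) (Set.Icc (-(c * t)) (c * t)) := by
  have h0 := profile_continuousOn (w := fun k => 1 / (k.factorial : ℝ) ^ 2)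
    (R := c * t) (fun k => by positivity) weight_zero_le
    (sq_nonneg (lam / (2 * c)))
  have h1 := profile_continuousOn
    (w := fun k => 1 / ((k.factorial : ℝ) * ((k + 1).factorial : ℝ))) (R := c * t) (fun k => by positivity) weight_one_le
    (sq_nonneg (lam / (2 * c)))
  unfold smoothDensity
  fun_prop

theorem smoothDensity_nonneg {lam c t x : ℝ} (hlam : 0 < lam) (hc : 0 < c) (ht : 0 < t)
    (hx : x ∈ Set.Icc (-(c * t)) (c * t)) : 0 ≤ smoothDensity lam c t x := by
  have hy : 0 ≤ (c * t) ^ 2 - x ^ 2 := by nlinarith [hx.1, hx.2]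
  have h0 := profile_nonneg (w := fun k => 1 / (k.factorial : ℝ) ^ 2) (fun k => by positivity)
    (sq_nonneg (lam / (2 * c))) hy
  have h1 := profile_nonneg (w := fun k => 1 / ((k.factorial : ℝ) * ((k + 1).factorial : ℝ)))
    (fun k => by positivity) (sq_nonneg (lam / (2 * c))) hy
  unfold smoothDensity
  positivity

theorem telegraphDensity_eq {lam c t x : ℝ} (hx : x ∈ Set.Ioo (-(c * t)) (c * t)) :
    telegraphDensity lam c x t = smoothDensity lam c t x := by
  have hy : 0 < (c * t) ^ 2 - x ^ 2 := by nlinarith [hx.1, hx.2]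
  have hs : 0 < √((c * t) ^ 2 - x ^ 2) := Real.sqrt_pos.mpr hy
  have hs2 : √((c * t) ^ 2 - x ^ 2) ^ 2 = (c * t) ^ 2 - x ^ 2 := Real.sq_sqrt hy.le
  have hsq : (lam / c * √((c * t) ^ 2 - x ^ 2) / 2) ^ 2 =
      (lam / (2 * c)) ^ 2 * ((c * t) ^ 2 - x ^ 2) := by
    calc _ = (lam / (2 * c)) ^ 2 * √((c * t) ^ 2 - x ^ 2) ^ 2 := by ring
      _ = _ := by rw [hs2]
  have e0 : besselI0 (lam / c * √((c * t) ^ 2 - x ^ 2)) =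
      besselProfile (fun k => 1 / (k.factorial : ℝ) ^ 2) ((lam / (2 * c)) ^ 2)
        ((c * t) ^ 2 - x ^ 2) := by
    unfold besselI0 besselProfile
    refine tsum_congr fun k => ?_
    rw [pow_mul, hsq]; ring
  have e1 : besselI1 (lam / c * √((c * t) ^ 2 - x ^ 2)) / √((c * t) ^ 2 - x ^ 2) =
      lam / (2 * c) * besselProfile (fun k => 1 / ((k.factorial : ℝ) * ((k + 1).factorial : ℝ)))
        ((lam / (2 * c)) ^ 2) ((c * t) ^ 2 - x ^ 2) := by
    unfold besselI1 besselProfile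
    rw [← tsum_div_const, ← tsum_mul_left]
    refine tsum_congr fun k => ?_
    rw [pow_succ _ (2 * k), pow_mul, hsq]
    generalize √((c * t) ^ 2 - x ^ 2) = s at hs
    field_simp
  unfold telegraphDensity smoothDensity
  rw [← mul_pow c t 2, mul_div_assoc t, e0, e1]
  ring

theorem indicator_telegraphDensity (lam c t : ℝ) :
    (fun x => ENNReal.ofReal
        (Set.indicator (Set.Ioo (-(c * t)) (c * t)) (fun y => telegraphDensity lam c y t) x)) =
      fun x => ENNReal.ofReal
        (Set.indicator (Set.Ioo (-(c * t)) (c * t)) (smoothDensity lam c t) x) := by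
  rw [Set.indicator_congr fun x hx => telegraphDensity_eq hx]

theorem integrable_indicator_smoothDensity (lam c t : ℝ) :
    Integrable (Set.indicator (Set.Ioo (-(c * t)) (c * t)) (smoothDensity lam c t)) := by
  rw [integrable_indicator_iff measurableSet_Ioo]
  exact ((smoothDensity_continuousOn lam c t).integrableOn_Icc).mono_set Set.Ioo_subset_Icc_self

instance telegraphLaw_finite (lam c t : ℝ) : IsFiniteMeasure (telegraphLaw lam c t) := by
  unfold telegraphLaw
  rw [indicator_telegraphDensity]
  have := isFiniteMeasure_withDensity_ofReal
    (integrable_indicator_smoothDensity lam c t).hasFiniteIntegral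
  have : IsFiniteMeasure (ENNReal.ofReal (Real.exp (-lam * t) / 2) •
      (Measure.dirac (-(c * t)) + Measure.dirac (c * t))) :=
    Measure.smul_finite _ ENNReal.ofReal_ne_top
  infer_instance

/-- Integration against the telegraph law, split into atoms and density. -/
theorem integral_telegraphLaw {lam c t : ℝ} (hlam : 0 < lam) (hc : 0 < c) (ht : 0 < t)
    {f : ℝ → ℝ} (hf : Continuous f) {B : ℝ} (hB : ∀ x, ‖f x‖ ≤ B) :
    ∫ x, f x ∂(telegraphLaw lam c t) = Real.exp (-lam * t) / 2 * (f (-(c * t)) + f (c * t)) +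
      ∫ x in (-(c * t))..(c * t), smoothDensity lam c t x * f x := by
  have hR : -(c * t) ≤ c * t := by nlinarith [mul_pos hc ht]
  have hint := integrable_indicator_smoothDensity lam c t
  have hfi : Integrable f (telegraphLaw lam c t) :=
    Integrable.of_bound hf.aestronglyMeasurable B (ae_of_all _ hB)
  unfold telegraphLaw at hfi ⊢
  rw [indicator_telegraphDensity] at hfi ⊢
  rw [integral_add_measure hfi.left_of_add_measure hfi.right_of_add_measure, integral_smul_measure,
    integral_add_measure (integrable_dirac (by simp)) (integrable_dirac (by simp)),
    integral_dirac, integral_dirac, ENNReal.toReal_ofReal (by positivity), smul_eq_mul]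
  congr 1
  rw [integral_withDensity_eq_integral_toReal_smul₀ hint.aemeasurable.ennreal_ofReal
    (ae_of_all _ fun _ => ENNReal.ofReal_lt_top), intervalIntegral.integral_of_le hR,
    integral_Ioc_eq_integral_Ioo, ← integral_indicator measurableSet_Ioo]
  congr 1 with x
  by_cases hx : x ∈ Set.Ioo (-(c * t)) (c * t)
  · rw [Set.indicator_of_mem hx, Set.indicator_of_mem hx, ENNReal.toReal_ofReal
      (smoothDensity_nonneg hlam hc ht (Set.Ioo_subset_Icc_self hx)), smul_eq_mul]
  · rw [Set.indicator_of_notMem hx, Set.indicator_of_notMem hx]; simp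

theorem integral_sin_telegraphLaw {lam c t : ℝ} (hlam : 0 < lam) (hc : 0 < c) (ht : 0 < t)
    (ξ : ℝ) : ∫ x, sin (ξ * x) ∂(telegraphLaw lam c t) = 0 := by
  rw [integral_telegraphLaw hlam hc ht (B := 1) (by fun_prop) fun x => abs_sin_le_one _]
  have h := intervalIntegral.integral_comp_neg (a := -(c * t)) (b := c * t)
    (fun x => smoothDensity lam c t x * sin (ξ * x))
  have heven : ∀ x, smoothDensity lam c t (-x) = smoothDensity lam c t x := fun x => by
    simp [smoothDensity]
  simp only [heven, mul_neg, sin_neg, intervalIntegral.integral_neg, neg_neg] at h ⊢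
  linarith

/-- The characteristic function of the telegraph law. In terms of `u = t²(λ² - ξ²c²)`, the series
`C = ∑ uⁿ/(2n)!` and `S = ∑ uⁿ/(2n+1)!` cover the trigonometric and hyperbolic regimes at once. The
term `cos(ξct)` coming from the atoms cancels the one in `integral_profile_one`. -/
theorem integral_cos_telegraphLaw {lam c t : ℝ} (hlam : 0 < lam) (hc : 0 < c) (ht : 0 < t)
    (ξ : ℝ) {C S : ℝ}
    (hC : HasSum (fun n : ℕ => (t ^ 2 * (lam ^ 2 - ξ ^ 2 * c ^ 2)) ^ n / ((2 * n).factorial : ℝ)) C)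
    (hS : HasSum (fun n : ℕ => (t ^ 2 * (lam ^ 2 - ξ ^ 2 * c ^ 2)) ^ n /
      ((2 * n + 1).factorial : ℝ)) S) :
    ∫ x, cos (ξ * x) ∂(telegraphLaw lam c t) = Real.exp (-lam * t) * (C + lam * t * S) := by
  rw [integral_telegraphLaw hlam hc ht (B := 1) (by fun_prop) fun x => abs_cos_le_one _]
  have hR : 0 ≤ c * t := by positivity
  have ha := sq_nonneg (lam / (2 * c))
  have hz : t ^ 2 * (lam ^ 2 - ξ ^ 2 * c ^ 2) =
      4 * (lam / (2 * c)) ^ 2 * (c * t) ^ 2 - ξ ^ 2 * (c * t) ^ 2 := by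
    field_simp
    ring
  rw [hz] at hC hS
  have i0 := integral_profile_zero ha hR ξ hS
  have i1 := integral_profile_one ha hR ξ hC
  have hint : ∀ w : ℕ → ℝ, (∀ k, 0 ≤ w k) → (∀ k, w k ≤ 1 / (k.factorial : ℝ)) →
      IntervalIntegrable (fun x => besselProfile w ((lam / (2 * c)) ^ 2) ((c * t) ^ 2 - x ^ 2) *
        cos (ξ * x)) volume (-(c * t)) (c * t) := by
    intro w h0 h1
    apply ContinuousOn.intervalIntegrable
    rw [Set.uIcc_of_le (by linarith)]
    exact (profile_continuousOn h0 h1 ha).mul (by fun_prop)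
  have j0 := hint (fun k => 1 / (k.factorial : ℝ) ^ 2) (fun k => by positivity) weight_zero_le
  have j1 := hint (fun k => 1 / ((k.factorial : ℝ) * ((k + 1).factorial : ℝ)))
    (fun k => by positivity) weight_one_le
  have hsplit : ∀ x, smoothDensity lam c t x * cos (ξ * x) =
      lam * Real.exp (-lam * t) / 2 * (1 / c) *
        (besselProfile (fun k => 1 / (k.factorial : ℝ) ^ 2) ((lam / (2 * c)) ^ 2)
          ((c * t) ^ 2 - x ^ 2) * cos (ξ * x)) +
      lam * Real.exp (-lam * t) / 2 * (t * (lam / (2 * c))) *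
        (besselProfile (fun k => 1 / ((k.factorial : ℝ) * ((k + 1).factorial : ℝ)))
          ((lam / (2 * c)) ^ 2) ((c * t) ^ 2 - x ^ 2) * cos (ξ * x)) := fun x => by
    unfold smoothDensity; ring
  simp only [hsplit]
  rw [intervalIntegral.integral_add (j0.const_mul _) (j1.const_mul _),
    intervalIntegral.integral_const_mul, intervalIntegral.integral_const_mul, i0]
  have hp : 4 * (lam / (2 * c)) ^ 2 * (c * t) ^ 2 ≠ 0 := by positivity
  rw [eq_div_of_mul_eq hp ((mul_comm _ _).trans i1), mul_neg, cos_neg]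
  field_simp
  ring

/-- The total mass is the characteristic function at `0`, namely
`e^{-λt}(cosh(λt) + sinh(λt)) = 1`. -/
theorem telegraphLaw_prob {lam c t : ℝ} (hlam : 0 < lam) (hc : 0 < c) (ht : 0 < t) :
    IsProbabilityMeasure (telegraphLaw lam c t) := by
  have hlt : lam * t ≠ 0 := by positivity
  have h := integral_cos_telegraphLaw hlam hc ht 0 (C := cosh (lam * t))
    (S := sinh (lam * t) / (lam * t))
    ((Real.hasSum_cosh (lam * t)).congr_fun fun n => by
      rw [pow_mul, mul_pow]; congr 2; ring)
    (((Real.hasSum_sinh (lam * t)).div_const (lam * t)).congr_fun fun n => by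
      rw [pow_succ _ (2 * n), pow_mul]; field_simp; ring)
  rw [mul_div_cancel₀ _ hlt, cosh_add_sinh, ← Real.exp_add] at h
  simp only [zero_mul, cos_zero, integral_const, smul_eq_mul, mul_one] at h
  rw [neg_mul, neg_add_cancel, Real.exp_zero] at h
  exact ⟨(ENNReal.toReal_eq_one_iff _).mp h⟩

theorem integral_cos_of_gt {lam c t : ℝ} (hlam : 0 < lam) (hc : 0 < c) (ht : 0 < t)
    {ξ : ℝ} (h : ξ * c > lam) :
    ∫ x, cos (ξ * x) ∂(telegraphLaw lam c t) = Real.exp (-lam * t) *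
      (cos (t * √(ξ ^ 2 * c ^ 2 - lam ^ 2)) +
        lam * sin (t * √(ξ ^ 2 * c ^ 2 - lam ^ 2)) / √(ξ ^ 2 * c ^ 2 - lam ^ 2)) := by
  have hpos : 0 < ξ ^ 2 * c ^ 2 - lam ^ 2 := by nlinarith
  have hs := Real.sqrt_pos.mpr hpos
  have hs2 := Real.sq_sqrt hpos.le
  set ω := √(ξ ^ 2 * c ^ 2 - lam ^ 2)
  have hz : t ^ 2 * (lam ^ 2 - ξ ^ 2 * c ^ 2) = -((t * ω) ^ 2) := by rw [mul_pow, hs2]; ring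
  rw [integral_cos_telegraphLaw hlam hc ht ξ (C := cos (t * ω)) (S := sin (t * ω) / (t * ω))]
  · field_simp
  · refine (Real.hasSum_cos (t * ω)).congr_fun fun n => ?_
    rw [hz, neg_pow, pow_mul]
  · refine ((Real.hasSum_sin (t * ω)).div_const (t * ω)).congr_fun fun n => ?_
    rw [hz, neg_pow, pow_succ (t * ω) (2 * n), pow_mul]
    field_simp

theorem integral_cos_of_lt {lam c t : ℝ} (hlam : 0 < lam) (hc : 0 < c) (ht : 0 < t)
    {ξ : ℝ} (hξ : 0 ≤ ξ) (h : ξ * c < lam) :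
    ∫ x, cos (ξ * x) ∂(telegraphLaw lam c t) = Real.exp (-lam * t) *
      (cosh (t * √(lam ^ 2 - ξ ^ 2 * c ^ 2)) +
        lam * sinh (t * √(lam ^ 2 - ξ ^ 2 * c ^ 2)) / √(lam ^ 2 - ξ ^ 2 * c ^ 2)) := by
  have hpos : 0 < lam ^ 2 - ξ ^ 2 * c ^ 2 := by nlinarith [mul_nonneg hξ hc.le]
  have hs := Real.sqrt_pos.mpr hpos
  have hs2 := Real.sq_sqrt hpos.le
  have hz : t ^ 2 * (lam ^ 2 - ξ ^ 2 * c ^ 2) = (t * √(lam ^ 2 - ξ ^ 2 * c ^ 2)) ^ 2 := by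
    rw [mul_pow, hs2]
  set ω := √(lam ^ 2 - ξ ^ 2 * c ^ 2)
  rw [integral_cos_telegraphLaw hlam hc ht ξ (C := cosh (t * ω)) (S := sinh (t * ω) / (t * ω))]
  · field_simp
  · refine (Real.hasSum_cosh (t * ω)).congr_fun fun n => ?_
    rw [hz, pow_mul]
  · refine ((Real.hasSum_sinh (t * ω)).div_const (t * ω)).congr_fun fun n => ?_
    rw [hz, pow_succ (t * ω) (2 * n), pow_mul]
    field_simp

/-- Integrating `eₙ` against the wrapped law gives the characteristic function of the telegraph
law at the integer `n`, which is real since the law is symmetric. -/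
theorem integral_fourier_wrapped {lam c t : ℝ} (hlam : 0 < lam) (hc : 0 < c) (ht : 0 < t) (n : ℤ) :
    ∫ y, fourier n y ∂(Measure.map (fun x : ℝ => (x : AddCircle (2 * Real.pi)))
      (telegraphLaw lam c t)) = ((∫ x, cos (n * x) ∂(telegraphLaw lam c t) : ℝ) : ℂ) := by
  have hm : Measurable fun x : ℝ => (x : AddCircle (2 * Real.pi)) :=
    AddCircle.measurable_mk'
  rw [integral_map hm.aemeasurable (by fun_prop)]
  have hpt : ∀ x : ℝ, fourier n (x : AddCircle (2 * Real.pi)) =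
      ((cos (n * x) : ℝ) : ℂ) + ((sin (n * x) : ℝ) : ℂ) * Complex.I := by
    intro x
    rw [fourier_coe_apply]
    push_cast
    rw [← Complex.exp_mul_I]
    congr 1
    have : (Real.pi : ℂ) ≠ 0 := by exact_mod_cast Real.pi_ne_zero
    field_simp
  simp only [hpt]
  have ic : Integrable (fun x => ((cos (n * x) : ℝ) : ℂ)) (telegraphLaw lam c t) :=
    (Integrable.of_bound (f := fun x : ℝ => cos (n * x)) (by fun_prop) 1
      (ae_of_all _ fun x => abs_cos_le_one _)).ofReal
  have is : Integrable (fun x => ((sin (n * x) : ℝ) : ℂ) * Complex.I) (telegraphLaw lam c t) :=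
    ((Integrable.of_bound (f := fun x : ℝ => sin (n * x)) (by fun_prop) 1
      (ae_of_all _ fun x => abs_sin_le_one _)).ofReal).mul_const _
  rw [integral_add ic is, integral_mul_const, integral_complex_ofReal, integral_complex_ofReal,
    integral_sin_telegraphLaw hlam hc ht]
  simp

/-! ### The wrapped law -/

/-- For an even, real coefficient sequence with `ψ 0 = 1`, the Abel sum is a cosine series. -/
theorem abelSum_re_apply {ψ : ℤ → ℂ} {φ : ℕ → ℝ} (hψ : ∀ n, ‖ψ n‖ ≤ 1) (hψ0 : ψ 0 = 1)
    (hpos : ∀ k : ℕ, ψ ((k + 1 : ℕ) : ℤ) = (φ (k + 1) : ℂ))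
    (hneg : ∀ k : ℕ, ψ (-((k + 1 : ℕ) : ℤ)) = (φ (k + 1) : ℂ)) {r : ℝ} (h0 : 0 < r) (h1 : r < 1)
    (x : ℝ) :
    (abelSum ψ r (x : AddCircle (2 * Real.pi))).re =
      1 + 2 * ∑' k : ℕ, φ (k + 1) * r ^ (k + 1) * cos ((k + 1 : ℕ) * x) := by
  have hs := (ContinuousMap.hasSum_apply (abelSum_hasSum hψ h0 h1)
    (x : AddCircle (2 * Real.pi))).nat_add_neg
  rw [← hasSum_nat_add_iff' 1] at hs
  have hf : ∀ n : ℤ, fourier n (x : AddCircle (2 * Real.pi)) =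
      Complex.exp (((n * x : ℝ) : ℂ) * Complex.I) := by
    intro n
    rw [fourier_coe_apply]
    congr 1
    have : (Real.pi : ℂ) ≠ 0 := by exact_mod_cast Real.pi_ne_zero
    push_cast
    field_simp
  have hs' := Complex.hasSum_re hs
  have hterm : HasSum (fun k : ℕ => 2 * (φ (k + 1) * r ^ (k + 1) * cos ((k + 1 : ℕ) * x)))
      ((abelSum ψ r (x : AddCircle (2 * Real.pi))).re - 1) := by
    convert hs' using 1
    · funext k
      simp only [ContinuousMap.coe_smul, Pi.smul_apply, smul_eq_mul, hf, hpos, hneg, neg_neg,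
        Int.natAbs_neg, Int.natAbs_natCast, Complex.add_re, ← Complex.ofReal_mul,
        Complex.re_ofReal_mul, Complex.exp_ofReal_mul_I_re]
      push_cast
      rw [neg_mul, cos_neg]
      ring
    · simp [hψ0, hf]
  rw [tsum_mul_left.symm.trans hterm.tsum_eq]
  ring

/-- Abel-summation (Fourier) representation of the wrapped telegraph law on the circle
`ℝ/2πℤ`: for every Borel set `A` whose boundary is null for the wrapped law,
`p_{Z,t}(A) = lim_{r→1⁻} ∫_A (1/2π)(1 + 2∑_{k≥1} φ_k(t) r^k cos(kθ)) dθ`. -/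
theorem wrapped_telegraph_fourier_inversion
    (lam c t : ℝ) (hlam : 0 < lam) (hc : 0 < c) (ht : 0 < t)
    (hnint : ∀ k : ℕ, 0 < k → (k : ℝ) * c ≠ lam)
    -- the Fourier coefficients of the wrapped law
    (φ : ℕ → ℝ)
    (hφ : ∀ k : ℕ, 1 ≤ k →
      ((k : ℝ) * c > lam →
        φ k = Real.exp (-lam * t) *
          (Real.cos (t * Real.sqrt ((k : ℝ) ^ 2 * c ^ 2 - lam ^ 2)) +
            lam * Real.sin (t * Real.sqrt ((k : ℝ) ^ 2 * c ^ 2 - lam ^ 2)) /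
              Real.sqrt ((k : ℝ) ^ 2 * c ^ 2 - lam ^ 2))) ∧
      ((k : ℝ) * c < lam →
        φ k = Real.exp (-lam * t) *
          (Real.cosh (t * Real.sqrt (lam ^ 2 - (k : ℝ) ^ 2 * c ^ 2)) +
            lam * Real.sinh (t * Real.sqrt (lam ^ 2 - (k : ℝ) ^ 2 * c ^ 2)) /
              Real.sqrt (lam ^ 2 - (k : ℝ) ^ 2 * c ^ 2))))
    -- the lift of `θ ↦ cos(kθ)` to the circle of circumference `2π`
    (cosk : ℕ → AddCircle (2 * Real.pi) → ℝ)
    (hcosk : ∀ (k : ℕ) (x : ℝ), cosk k ((x : ℝ) : AddCircle (2 * Real.pi)) = Real.cos (k * x))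
    -- the wrapped telegraph law
    (pZ : Measure (AddCircle (2 * Real.pi)))
    (hpZ : pZ = Measure.map (fun x : ℝ => (x : AddCircle (2 * Real.pi))) (telegraphLaw lam c t))
    (A : Set (AddCircle (2 * Real.pi))) (hA : MeasurableSet A)
    (hbd : pZ (frontier A) = 0) :
    Tendsto
      (fun r : ℝ =>
        ∫ θ in A,
          (1 / (2 * Real.pi)) *
            (1 + 2 * ∑' k : ℕ, φ (k + 1) * r ^ (k + 1) * cosk (k + 1) θ) ∂volume)
      (nhdsWithin 1 (Set.Iio 1)) (nhds (pZ A).toReal) := by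
  have hprob := telegraphLaw_prob hlam hc ht
  have hm : Measurable fun x : ℝ => (x : AddCircle (2 * Real.pi)) := AddCircle.measurable_mk'
  have hP : IsProbabilityMeasure pZ := hpZ ▸ Measure.isProbabilityMeasure_map hm.aemeasurable
  have hψ : ∀ n : ℤ, ∫ y, fourier n y ∂pZ =
      ((∫ x, cos (n * x) ∂(telegraphLaw lam c t) : ℝ) : ℂ) := fun n => by
    rw [hpZ]; exact integral_fourier_wrapped hlam hc ht n
  have hφ' : ∀ k : ℕ, ∫ x, cos (((k + 1 : ℕ) : ℝ) * x) ∂(telegraphLaw lam c t) = φ (k + 1) := by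
    intro k
    obtain h | h := lt_or_gt_of_ne (hnint (k + 1) k.succ_pos)
    · rw [integral_cos_of_lt hlam hc ht (Nat.cast_nonneg _) h, (hφ (k + 1) (by omega)).2 h]
    · rw [integral_cos_of_gt hlam hc ht h, (hφ (k + 1) (by omega)).1 h]
  have hnorm : ∀ n : ℤ, ‖∫ y, fourier n y ∂pZ‖ ≤ 1 := fun n => by
    have := norm_integral_le_of_norm_le_const (μ := pZ) (f := fun y => fourier n y) (C := 1)
      (ae_of_all _ fun y => (norm_fourier_apply n y).le)
    simpa using this
  have hpos : ∀ k : ℕ, ∫ y, fourier ((k + 1 : ℕ) : ℤ) y ∂pZ = (φ (k + 1) : ℂ) := fun k => by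
    rw [hψ, ← hφ' k, Int.cast_natCast]
  have hneg : ∀ k : ℕ, ∫ y, fourier (-((k + 1 : ℕ) : ℤ)) y ∂pZ = (φ (k + 1) : ℂ) := fun k => by
    rw [hψ, ← hφ' k, Int.cast_neg, Int.cast_natCast]
    simp only [neg_mul, cos_neg]
  have hzero : ∫ y, fourier 0 y ∂pZ = 1 := by simp
  refine (abel_tendsto pZ hA hbd).congr' ?_
  have hmem : ∀ᶠ r : ℝ in nhdsWithin 1 (Set.Iio 1), r ∈ Set.Ioo (0 : ℝ) 1 :=
    Ioo_mem_nhdsLT one_pos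
  filter_upwards [hmem] with r hr
  -- `volume` is `2π` times Haar probability measure, which absorbs the factor `1 / (2π)`.
  rw [AddCircle.volume_eq_smul_haarAddCircle, Measure.restrict_smul, integral_smul_measure,
    ENNReal.toReal_ofReal (by positivity), smul_eq_mul, ← integral_const_mul]
  congr 1 with θ
  obtain ⟨x, rfl⟩ := QuotientAddGroup.mk_surjective θ
  rw [abelSum_re_apply hnorm hzero hpos hneg hr.1 hr.2]
  simp only [hcosk]
  rw [← mul_assoc, mul_one_div_cancel (by positivity), one_mul]
end

section
/- Let λ, c > 0 and t > 0, and let x ∈ (−1, 1) with cos(ct) ≠ x. Define F_t(y) := p_t((−∞, y]). Then the pushforward of p_t under the cosine map satisfies (cos_* p_t)((−∞, x]) = ∑_{k ∈ ℤ} [ F_t((2k+2)π − arccos x) − F_t(arccos x + 2kπ) ], where the sum over ℤ has only finitely many nonzero terms (since p_t is supported in [−ct, ct]). -/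
/-!
For `-1 < x < 1` the set `{z | cos z ≤ x}` is the disjoint union over `k : ℤ` of the arcs
`[arccos x + 2kπ, (2k+2)π - arccos x]` (`cos_preimage_Iic`, `arcs_disjoint`). For any finite measure
with no atom on the fibre `cos z = x`, the mass of each closed arc is a difference of values of the
distribution function, and countable additivity gives the formula (`map_cos_Iic`).

The telegraph law satisfies both requirements. It is finite because the Bessel series are dominated
by `exp ((y / 2) ^ 2)`, so the density is bounded on `(-ct, ct)`. Its only atoms are `±ct`, and
these do not lie on the fibre because `cos (±ct) = cos (ct) ≠ x`.
-/

open MeasureTheory Real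

/-! ### Bounds on the Bessel series and finiteness of the telegraph law -/

lemma besselI0_term_le (y : ℝ) (k : ℕ) :
    (y / 2) ^ (2 * k) / ((Nat.factorial k : ℝ) ^ 2) ≤ ((y / 2) ^ 2) ^ k / (Nat.factorial k : ℝ) := by
  have h1 : (1 : ℝ) ≤ (Nat.factorial k : ℝ) := by exact_mod_cast Nat.succ_le_of_lt k.factorial_pos
  rw [pow_mul]
  exact div_le_div_of_nonneg_left (by positivity) (by positivity) (by nlinarith)

lemma besselI0_le (y : ℝ) : besselI0 y ≤ Real.exp ((y / 2) ^ 2) := by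
  have hs := Real.summable_pow_div_factorial ((y / 2) ^ 2)
  rw [Real.exp_eq_exp_ℝ, NormedSpace.exp_eq_tsum_div]
  have hs' : Summable fun k : ℕ => (y / 2) ^ (2 * k) / ((Nat.factorial k : ℝ) ^ 2) :=
    Summable.of_nonneg_of_le (fun k => by rw [pow_mul]; positivity) (besselI0_term_le y) hs
  exact hs'.tsum_le_tsum (besselI0_term_le y) hs

lemma besselI1_le {y : ℝ} (hy : 0 ≤ y) : besselI1 y ≤ y / 2 * Real.exp ((y / 2) ^ 2) := by
  have hs := (Real.summable_pow_div_factorial ((y / 2) ^ 2)).mul_left (y / 2)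
  have hle : ∀ k : ℕ, (y / 2) ^ (2 * k + 1) /
      ((Nat.factorial k : ℝ) * (Nat.factorial (k + 1) : ℝ)) ≤
        y / 2 * (((y / 2) ^ 2) ^ k / (Nat.factorial k : ℝ)) := by
    intro k
    have h1 : (1 : ℝ) ≤ (Nat.factorial (k + 1) : ℝ) := by
      exact_mod_cast Nat.succ_le_of_lt (k + 1).factorial_pos
    have h2 : (0 : ℝ) < (Nat.factorial k : ℝ) := by exact_mod_cast k.factorial_pos
    rw [pow_succ, pow_mul, mul_comm (y / 2), div_mul_eq_mul_div]
    exact div_le_div_of_nonneg_left (by positivity) h2 (le_mul_of_one_le_right h2.le h1)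
  have hs' := Summable.of_nonneg_of_le (fun k => by positivity) hle hs
  rw [Real.exp_eq_exp_ℝ, NormedSpace.exp_eq_tsum_div, ← tsum_mul_left]
  exact hs'.tsum_le_tsum hle hs

lemma telegraphDensity_le {lam c t : ℝ} (hlam : 0 < lam) (hc : 0 < c) (ht : 0 < t) (x : ℝ) :
    telegraphDensity lam c x t ≤ lam * Real.exp (-lam * t) / 2 *
      ((1 / c) * Real.exp ((lam * t / 2) ^ 2) +
        t * (lam / c / 2 * Real.exp ((lam * t / 2) ^ 2))) := by
  unfold telegraphDensity
  set s := Real.sqrt (c ^ 2 * t ^ 2 - x ^ 2) with hs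
  have hs0 : 0 ≤ s := Real.sqrt_nonneg _
  have hsle : s ≤ c * t := by
    rw [hs]
    exact Real.sqrt_le_iff.2 ⟨by positivity, by nlinarith [sq_nonneg x]⟩
  have hy : lam / c * s ≤ lam * t := by
    calc lam / c * s ≤ lam / c * (c * t) := by gcongr
      _ = lam * t := by field_simp
  have hy0 : 0 ≤ lam / c * s := by positivity
  have hexp : Real.exp ((lam / c * s / 2) ^ 2) ≤ Real.exp ((lam * t / 2) ^ 2) := by gcongr
  have h0 := (besselI0_le (lam / c * s)).trans hexp
  have h1 : besselI1 (lam / c * s) / s ≤ lam / c / 2 * Real.exp ((lam * t / 2) ^ 2) := by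
    rcases hs0.eq_or_lt with h | h
    · rw [← h, div_zero]; positivity
    · rw [div_le_iff₀ h]
      calc besselI1 (lam / c * s) ≤ lam / c * s / 2 * Real.exp ((lam / c * s / 2) ^ 2) :=
            besselI1_le hy0
        _ ≤ lam / c * s / 2 * Real.exp ((lam * t / 2) ^ 2) := by gcongr
        _ = _ := by ring
  rw [mul_div_assoc t]
  gcongr

lemma isFiniteMeasure_telegraphLaw {lam c t : ℝ} (hlam : 0 < lam) (hc : 0 < c) (ht : 0 < t) :
    IsFiniteMeasure (telegraphLaw lam c t) := by
  set C := lam * Real.exp (-lam * t) / 2 *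
      ((1 / c) * Real.exp ((lam * t / 2) ^ 2) +
        t * (lam / c / 2 * Real.exp ((lam * t / 2) ^ 2)))
  have hfin : IsFiniteMeasure (volume.withDensity fun x =>
      ENNReal.ofReal
        (Set.indicator (Set.Ioo (-(c * t)) (c * t)) (fun y => telegraphDensity lam c y t) x)) := by
    refine isFiniteMeasure_withDensity (ne_top_of_le_ne_top ?_ (lintegral_mono (g :=
      (Set.Ioo (-(c * t)) (c * t)).indicator fun _ => ENNReal.ofReal C) ?_))
    · rw [lintegral_indicator_const measurableSet_Ioo, Real.volume_Ioo]
      exact ENNReal.mul_ne_top ENNReal.ofReal_ne_top ENNReal.ofReal_ne_top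
    · intro x
      by_cases h : x ∈ Set.Ioo (-(c * t)) (c * t)
      · simp only [Set.indicator_of_mem h]
        exact ENNReal.ofReal_le_ofReal (telegraphDensity_le hlam hc ht x)
      · simp only [Set.indicator_of_notMem h, ENNReal.ofReal_zero, le_refl]
  have hd : IsFiniteMeasure (ENNReal.ofReal (Real.exp (-lam * t) / 2) •
      (Measure.dirac (-(c * t)) + Measure.dirac (c * t))) :=
    Measure.smul_finite _ ENNReal.ofReal_ne_top
  unfold telegraphLaw
  infer_instance

lemma telegraphLaw_singleton {lam c t a : ℝ} (h1 : -(c * t) ≠ a) (h2 : c * t ≠ a) :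
    telegraphLaw lam c t {a} = 0 := by
  have h : (volume.withDensity fun x => ENNReal.ofReal
      (Set.indicator (Set.Ioo (-(c * t)) (c * t)) (fun y => telegraphDensity lam c y t) x)) {a}
      = 0 := withDensity_absolutelyContinuous _ _ (by simp)
  unfold telegraphLaw
  rw [Measure.add_apply, h]
  simp [h1, h2]

/-! ### The sublevel sets of the cosine -/

lemma cos_preimage_Iic {x : ℝ} (hx : x ∈ Set.Ioo (-1 : ℝ) 1) :
    Real.cos ⁻¹' Set.Iic x = ⋃ k : ℤ, Set.Icc (Real.arccos x + 2 * (k : ℝ) * Real.pi)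
      ((2 * (k : ℝ) + 2) * Real.pi - Real.arccos x) := by
  have hpi := Real.pi_pos
  have hA0 : 0 ≤ Real.arccos x := Real.arccos_nonneg x
  have hA1 : Real.arccos x ≤ Real.pi := Real.arccos_le_pi x
  have hcosA : Real.cos (Real.pi - Real.arccos x) = -x := by
    rw [Real.cos_pi_sub, Real.cos_arccos hx.1.le hx.2.le]
  -- Centring at the odd multiple of `π` in the middle of the arc makes the condition symmetric.
  have hcos : ∀ (z : ℝ) (k : ℤ), Real.cos z = -Real.cos |z - k * (2 * Real.pi) - Real.pi| := by
    intro z k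
    rw [Real.cos_abs, Real.cos_sub_pi, neg_neg, Real.cos_sub_int_mul_two_pi]
  ext z
  simp only [Set.mem_preimage, Set.mem_Iic, Set.mem_iUnion, Set.mem_Icc]
  constructor
  · intro hz
    refine ⟨⌊z / (2 * Real.pi)⌋, ?_⟩
    have hf1 := (le_div_iff₀ (by positivity)).1 (Int.floor_le (z / (2 * Real.pi)))
    have hf2 := (div_lt_iff₀ (by positivity)).1 (Int.lt_floor_add_one (z / (2 * Real.pi)))
    rw [hcos z ⌊z / (2 * Real.pi)⌋] at hz
    generalize ⌊z / (2 * Real.pi)⌋ = k at *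
    have habs : |z - k * (2 * Real.pi) - Real.pi| ≤ Real.pi := by
      rw [abs_le]; constructor <;> linarith
    have hle : |z - k * (2 * Real.pi) - Real.pi| ≤ Real.pi - Real.arccos x :=
      (Real.strictAntiOn_cos.le_iff_ge ⟨by linarith, by linarith⟩
        ⟨abs_nonneg _, habs⟩).1 (by linarith)
    rw [abs_le] at hle
    constructor <;> linarith
  · rintro ⟨k, h1, h2⟩
    have hle : |z - k * (2 * Real.pi) - Real.pi| ≤ Real.pi - Real.arccos x := by
      rw [abs_le]; constructor <;> linarith
    have := Real.cos_le_cos_of_nonneg_of_le_pi (abs_nonneg _) (by linarith) hle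
    rw [hcos z k]
    linarith

lemma arcs_disjoint {x : ℝ} (hx : x < 1) :
    Pairwise (Function.onFun Disjoint fun k : ℤ =>
      Set.Icc (Real.arccos x + 2 * (k : ℝ) * Real.pi)
        ((2 * (k : ℝ) + 2) * Real.pi - Real.arccos x)) := by
  have hpi := Real.pi_pos
  have hA : 0 < Real.arccos x := Real.arccos_pos.2 hx
  rw [pairwise_disjoint_on]
  intro m n hmn
  rw [Set.disjoint_left]
  rintro z ⟨_, h2⟩ ⟨h3, _⟩
  have : (m : ℝ) + 1 ≤ n := by exact_mod_cast hmn
  nlinarith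

/-! ### The distribution function of the cosine -/

/-- The closed arcs exhaust the sublevel set; the absence of mass on `cos a = x` allows a closed
arc to be traded for a half-open one, whose mass is a difference of distribution functions. -/
lemma map_cos_Iic (μ : Measure ℝ) [IsFiniteMeasure μ] {x : ℝ} (hx : x ∈ Set.Ioo (-1 : ℝ) 1)
    (hμ : ∀ a, Real.cos a = x → μ {a} = 0) :
    ((Measure.map Real.cos μ) (Set.Iic x)).toReal
      = ∑' k : ℤ, ((μ (Set.Iic ((2 * (k : ℝ) + 2) * Real.pi - Real.arccos x))).toReal
          - (μ (Set.Iic (Real.arccos x + 2 * (k : ℝ) * Real.pi))).toReal) := by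
  rw [Measure.map_apply Real.measurable_cos measurableSet_Iic, cos_preimage_Iic hx,
    measure_iUnion (arcs_disjoint hx.2) (fun _ => measurableSet_Icc),
    ENNReal.tsum_toReal_eq (fun _ => measure_ne_top _ _)]
  refine tsum_congr fun k => ?_
  have hab : Real.arccos x + 2 * (k : ℝ) * Real.pi ≤
      (2 * (k : ℝ) + 2) * Real.pi - Real.arccos x := by
    linarith [Real.arccos_le_pi x]
  have ha : Real.cos (Real.arccos x + 2 * (k : ℝ) * Real.pi) = x := by
    rw [show Real.arccos x + 2 * (k : ℝ) * Real.pi = Real.arccos x + k * (2 * Real.pi) by ring,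
      Real.cos_add_int_mul_two_pi, Real.cos_arccos hx.1.le hx.2.le]
  rw [← measure_congr (Ioc_ae_eq_Icc' (hμ _ ha)), ← Set.Iic_sdiff_Iic,
    measure_sdiff (Set.Iic_subset_Iic.2 hab) measurableSet_Iic.nullMeasurableSet
      (measure_ne_top _ _),
    ENNReal.toReal_sub_of_le (measure_mono (Set.Iic_subset_Iic.2 hab)) (measure_ne_top _ _)]

/-- CDF of the cosine component `Z₁(t) = cos X(t)` of the circular telegraph process:
`P(cos X(t) ≤ x) = ∑_{k ∈ ℤ} [F_t((2k+2)π − arccos x) − F_t(arccos x + 2kπ)]`. -/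
theorem cos_telegraph_cdf
    (lam c t : ℝ) (hlam : 0 < lam) (hc : 0 < c) (ht : 0 < t)
    (x : ℝ) (hx : x ∈ Set.Ioo (-1 : ℝ) 1) (hcos : Real.cos (c * t) ≠ x)
    (F : ℝ → ℝ) (hF : ∀ y, F y = ((telegraphLaw lam c t) (Set.Iic y)).toReal) :
    ((Measure.map Real.cos (telegraphLaw lam c t)) (Set.Iic x)).toReal
      = ∑' k : ℤ, (F ((2 * (k : ℝ) + 2) * Real.pi - Real.arccos x)
          - F (Real.arccos x + 2 * (k : ℝ) * Real.pi)) := by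
  have := isFiniteMeasure_telegraphLaw hlam hc ht
  simp only [hF]
  refine map_cos_Iic _ hx fun a ha => telegraphLaw_singleton ?_ ?_
  · rintro rfl
    exact hcos (by rwa [Real.cos_neg] at ha)
  · rintro rfl
    exact hcos ha
end

section
/- Let λ, c > 0 and t > 0. Then the pushforward of the telegraph law p_t under the cosine map decomposes as cos_* p_t = e^{−λt}·δ_{cos(ct)} + ν_t·1_{(−1,1)}·Leb, where the density of the absolutely continuous part is ν_t(x) := (1−x²)^{−1/2}·∑_{k ∈ ℤ} [ μ((2k+2)π − arccos x, t)·1_{|(2k+2)π − arccos x| < ct} + μ(arccos x + 2kπ, t)·1_{|arccos x + 2kπ| < ct} ] for x ∈ (−1,1). -/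
/-! A measure on the line pushed forward by `cos` is computed by cutting `ℝ` into the period
intervals `(2kπ - π, 2kπ + π]`, folding each of them at its midpoint, and substituting
`y = arccos x` on `(0, π)`, where the Jacobian is `(1 - x²)^(-1/2)`. This is
`lintegral_eq_lintegral_arccos`, an identity for Lebesgue integrals of arbitrary nonnegative
measurable functions, so no convergence question arises there. Applied to the density restricted to
`cos ⁻¹' s` it gives the absolutely continuous part as a sum in `ℝ≥0∞`; the real-valued series in
the theorem agrees with it because the density is nonnegative and only finitely many translates of
a point lie in `(-ct, ct)`. The two atoms at `±ct` merge because `cos` is even. -/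

open MeasureTheory Real

open Set
open scoped ENNReal

lemma lintegral_eq_tsum_period (f : ℝ → ℝ≥0∞) :
    ∫⁻ y, f y = ∑' k : ℤ, ∫⁻ y in Ioc (-π) π, f (y + 2 * k * π) := by
  have h := isAddFundamentalDomain_Ioc (T := 2 * π) (by positivity) (-π)
  rw [h.lintegral_eq_tsum'' f]
  let e : ℤ → AddSubgroup.zmultiples (2 * π) :=
    fun n => ⟨n • (2 * π), AddSubgroup.zsmul_mem_zmultiples (2 * π) n⟩
  have he : Function.Bijective e :=
    (Equiv.ofInjective (fun n : ℤ => n • (2 * π))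
      (zsmul_left_strictMono (by positivity)).injective).bijective
  rw [← (Equiv.ofBijective e he).tsum_eq]
  refine tsum_congr fun k => ?_
  rw [show -π + 2 * π = π by ring]
  refine lintegral_congr fun y => congrArg f ?_
  change k • (2 * π) + y = _
  rw [zsmul_eq_mul]
  ring

lemma setLIntegral_Ioc_eq_fold {f : ℝ → ℝ≥0∞} (hf : Measurable f) :
    ∫⁻ y in Ioc (-π) π, f y = ∫⁻ y in Ioo 0 π, (f (-y) + f y) := by
  have hpi := pi_pos
  rw [lintegral_add_right _ hf, ← Ioc_union_Ioc_eq_Ioc (b := 0) (by linarith) hpi.le,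
    lintegral_union measurableSet_Ioc (by
      rw [Set.disjoint_left]; intro x h1 h2; exact absurd h1.2 (not_le.2 h2.1)),
    setLIntegral_congr (Ioo_ae_eq_Ioc (a := (0 : ℝ)) (b := π)).symm,
    setLIntegral_congr (Ioo_ae_eq_Ioc (a := -π) (b := (0 : ℝ))).symm]
  congr 1
  have := (Measure.measurePreserving_neg (volume : Measure ℝ)).setLIntegral_comp_preimage
    (s := Ioo (-π) 0) measurableSet_Ioo hf
  rw [← this]
  simp

lemma arccos_image_Ioo : arccos '' Ioo (-1) 1 = Ioo 0 π := by
  ext y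
  constructor
  · rintro ⟨x, hx, rfl⟩
    refine ⟨arccos_pos.2 hx.2, ?_⟩
    exact lt_of_le_of_ne (arccos_le_pi x) fun h => absurd (arccos_eq_pi.1 h) (not_le.2 hx.1)
  · intro hy
    refine ⟨cos y, ⟨?_, ?_⟩, arccos_cos hy.1.le hy.2.le⟩
    · rw [← cos_pi]
      exact cos_lt_cos_of_nonneg_of_le_pi hy.1.le le_rfl hy.2
    · rw [← cos_zero]
      exact cos_lt_cos_of_nonneg_of_le_pi le_rfl hy.2.le hy.1

lemma setLIntegral_Ioo_eq_arccos (f : ℝ → ℝ≥0∞) :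
    ∫⁻ y in Ioo 0 π, f y =
      ∫⁻ x in Ioo (-1) 1, ENNReal.ofReal (√(1 - x ^ 2))⁻¹ * f (arccos x) := by
  rw [← arccos_image_Ioo, lintegral_image_eq_lintegral_abs_deriv_mul measurableSet_Ioo
    (fun x hx => (hasDerivAt_arccos hx.1.ne' hx.2.ne).hasDerivWithinAt)
    (fun x hx y hy h => arccos_injOn ⟨hx.1.le, hx.2.le⟩ ⟨hy.1.le, hy.2.le⟩ h)]
  refine lintegral_congr fun x => ?_
  rw [abs_neg, one_div, abs_of_nonneg (by positivity)]

/-- Substitution `y ↦ cos y` on the whole line: each `x ∈ (-1, 1)` has the preimages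
`± arccos x + 2kπ`, and the Jacobian is the same at all of them. -/
lemma lintegral_eq_lintegral_arccos {f : ℝ → ℝ≥0∞} (hf : Measurable f) :
    ∫⁻ y, f y = ∫⁻ x in Ioo (-1) 1, ENNReal.ofReal (√(1 - x ^ 2))⁻¹ *
      ∑' k : ℤ, (f ((2 * k + 2) * π - arccos x) + f (arccos x + 2 * k * π)) := by
  have hm (k : ℤ) : Measurable fun y => f (y + 2 * k * π) := by fun_prop
  rw [lintegral_eq_tsum_period]
  simp_rw [fun k => setLIntegral_Ioc_eq_fold (hm k)]
  rw [← lintegral_tsum (fun k => by fun_prop), setLIntegral_Ioo_eq_arccos]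
  refine lintegral_congr fun x => ?_
  congr 1
  rw [ENNReal.tsum_add, ENNReal.tsum_add]
  congr 1
  -- The reflected points are indexed from `k = -1` on one side and from `k = 0` on the other.
  rw [← (Equiv.addRight (1 : ℤ)).tsum_eq]
  refine tsum_congr fun k => congrArg f ?_
  simp only [Equiv.coe_addRight]
  push_cast
  ring

lemma measurable_besselI0 : Measurable besselI0 := by
  unfold besselI0
  exact Measurable.tsum fun k => by fun_prop

lemma measurable_besselI1 : Measurable besselI1 := by
  unfold besselI1
  exact Measurable.tsum fun k => by fun_prop

lemma measurable_telegraphDensity (lam c t : ℝ) :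
    Measurable fun x => telegraphDensity lam c x t := by
  have h0 := measurable_besselI0
  have h1 := measurable_besselI1
  unfold telegraphDensity
  fun_prop

lemma telegraphDensity_nonneg {lam c t : ℝ} (hlam : 0 < lam) (hc : 0 < c) (ht : 0 < t) (x : ℝ) :
    0 ≤ telegraphDensity lam c x t := by
  have h0 (y : ℝ) (hy : 0 ≤ y) : 0 ≤ besselI0 y := tsum_nonneg fun k => by positivity
  have h1 (y : ℝ) (hy : 0 ≤ y) : 0 ≤ besselI1 y := tsum_nonneg fun k => by positivity
  have h0' := h0 (lam / c * √(c ^ 2 * t ^ 2 - x ^ 2)) (by positivity)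
  have h1' := h1 (lam / c * √(c ^ 2 * t ^ 2 - x ^ 2)) (by positivity)
  unfold telegraphDensity
  positivity

/-- Only finitely many points of an arithmetic progression of step `2π` lie in `(-r, r)`. -/
lemma finite_abs_add_lt (a r : ℝ) : {k : ℤ | |a + 2 * k * π| < r}.Finite := by
  refine (finite_Icc ⌊(-r - a) / (2 * π)⌋ ⌈(r - a) / (2 * π)⌉).subset fun k hk => ?_
  have h2 : 0 < 2 * π := by positivity
  rw [mem_ofPred_eq, abs_lt] at hk
  obtain ⟨h₁, h₂⟩ := hk
  constructor
  · have : (-r - a) / (2 * π) ≤ k := by rw [div_le_iff₀ h2]; linarith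
    exact_mod_cast (Int.floor_le _).trans this
  · have : (k : ℝ) ≤ (r - a) / (2 * π) := by rw [le_div_iff₀ h2]; linarith
    exact_mod_cast this.trans (Int.le_ceil _)

lemma ofReal_inv_sqrt_mul_tsum {g : ℝ → ℝ} (hg : ∀ y, 0 ≤ g y) (r x : ℝ) :
    ENNReal.ofReal ((√(1 - x ^ 2))⁻¹ * ∑' k : ℤ,
      ((if |(2 * (k : ℝ) + 2) * π - arccos x| < r then g ((2 * (k : ℝ) + 2) * π - arccos x) else 0)
      + (if |arccos x + 2 * (k : ℝ) * π| < r then g (arccos x + 2 * (k : ℝ) * π) else 0))) =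
    ENNReal.ofReal (√(1 - x ^ 2))⁻¹ * ∑' k : ℤ,
      (ENNReal.ofReal ((Ioo (-r) r).indicator g ((2 * k + 2) * π - arccos x)) +
       ENNReal.ofReal ((Ioo (-r) r).indicator g (arccos x + 2 * k * π))) := by
  have hi (y : ℝ) : (if |y| < r then g y else 0) = (Ioo (-r) r).indicator g y := by
    simp only [indicator_apply, mem_Ioo, abs_lt]
  have hn (y : ℝ) : 0 ≤ (Ioo (-r) r).indicator g y := indicator_nonneg (fun y _ => hg y) y
  rw [ENNReal.ofReal_mul (by positivity)]
  congr 1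
  simp_rw [hi]
  rw [ENNReal.ofReal_tsum_of_nonneg (fun k => add_nonneg (hn _) (hn _))]
  · exact tsum_congr fun k => ENNReal.ofReal_add (hn _) (hn _)
  · refine Summable.add ?_ ?_
    · refine summable_of_hasFiniteSupport ((finite_abs_add_lt (2 * π - arccos x) r).subset
        fun k hk => ?_)
      have := mem_of_indicator_ne_zero hk
      rw [mem_ofPred_eq, abs_lt]
      exact ⟨by linarith [this.1], by linarith [this.2]⟩
    · refine summable_of_hasFiniteSupport ((finite_abs_add_lt (arccos x) r).subset
        fun k hk => ?_)
      have := mem_of_indicator_ne_zero hk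
      exact abs_lt.2 this

/-- Law of the cosine component `Z₁(t) = cos X(t)` of the circular telegraph process:
`cos_* p_t = e^{−λt}·δ_{cos(ct)} + ν_t·1_{(−1,1)}·Leb` where
`ν_t(x) = (1−x²)^{−1/2}·∑_{k∈ℤ}[μ((2k+2)π−arccos x,t)1_{|·|<ct} + μ(arccos x+2kπ,t)1_{|·|<ct}]`. -/
theorem cos_telegraph_law
    (lam c t : ℝ) (hlam : 0 < lam) (hc : 0 < c) (ht : 0 < t)
    (ν : ℝ → ℝ)
    (hν : ∀ x ∈ Set.Ioo (-1 : ℝ) 1,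
      ν x = (Real.sqrt (1 - x ^ 2))⁻¹ *
        ∑' k : ℤ,
          ((if |(2 * (k : ℝ) + 2) * Real.pi - Real.arccos x| < c * t then
              telegraphDensity lam c ((2 * (k : ℝ) + 2) * Real.pi - Real.arccos x) t
            else 0) +
          (if |Real.arccos x + 2 * (k : ℝ) * Real.pi| < c * t then
              telegraphDensity lam c (Real.arccos x + 2 * (k : ℝ) * Real.pi) t
            else 0))) :
    Measure.map Real.cos (telegraphLaw lam c t)
      = ENNReal.ofReal (Real.exp (-lam * t)) • Measure.dirac (Real.cos (c * t)) +
          MeasureTheory.volume.withDensity fun x =>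
            ENNReal.ofReal (Set.indicator (Set.Ioo (-1 : ℝ) 1) ν x) := by
  have hcos := measurable_cos
  unfold telegraphLaw
  rw [Measure.map_add _ _ hcos, Measure.map_smul, Measure.map_add _ _ hcos,
    Measure.map_dirac' hcos, Measure.map_dirac' hcos, cos_neg]
  congr 1
  · rw [← two_smul ℝ≥0∞, smul_smul]
    congr 1
    rw [← ENNReal.ofReal_ofNat 2, ← ENNReal.ofReal_mul (by positivity)]
    congr 1
    ring
  have hpos := telegraphDensity_nonneg (t := t) hlam hc ht
  have hmeas : Measurable fun x => ENNReal.ofReal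
      ((Ioo (-(c * t)) (c * t)).indicator (fun y => telegraphDensity lam c y t) x) :=
    ((measurable_telegraphDensity lam c t).indicator measurableSet_Ioo).ennreal_ofReal
  ext s hs
  have hs' := hcos hs
  rw [Measure.map_apply hcos hs, withDensity_apply _ hs', withDensity_apply _ hs,
    ← lintegral_indicator hs', lintegral_eq_lintegral_arccos (hmeas.indicator hs'),
    ← lintegral_indicator measurableSet_Ioo, ← lintegral_indicator hs]
  refine lintegral_congr fun x => ?_
  by_cases hx : x ∈ Ioo (-1 : ℝ) 1
  swap
  · rw [indicator_of_notMem hx]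
    by_cases hxs : x ∈ s <;> simp only [hxs, hx, not_false_eq_true,
      indicator_of_mem, indicator_of_notMem, ENNReal.ofReal_zero]
  rw [indicator_of_mem hx]
  have hc1 : cos (arccos x) = x := cos_arccos hx.1.le hx.2.le
  have hcos₁ (k : ℤ) : cos ((2 * k + 2) * π - arccos x) = x := by
    rw [show (2 * k + 2) * π - arccos x = ((k + 1 : ℤ) : ℝ) * (2 * π) - arccos x by
      push_cast; ring, cos_int_mul_two_pi_sub, hc1]
  have hcos₂ (k : ℤ) : cos (arccos x + 2 * k * π) = x := by
    rw [show arccos x + 2 * k * π = arccos x + k * (2 * π) by ring,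
      cos_add_int_mul_two_pi, hc1]
  by_cases hxs : x ∈ s
  · rw [indicator_of_mem hxs, indicator_of_mem hx, hν x hx,
      ofReal_inv_sqrt_mul_tsum (g := fun y => telegraphDensity lam c y t) hpos]
    congr 1
    refine tsum_congr fun k => ?_
    have h₁ : (2 * k + 2) * π - arccos x ∈ cos ⁻¹' s := by rwa [mem_preimage, hcos₁]
    have h₂ : arccos x + 2 * k * π ∈ cos ⁻¹' s := by rwa [mem_preimage, hcos₂]
    rw [indicator_of_mem h₁, indicator_of_mem h₂]
  · rw [indicator_of_notMem hxs]
    simp [indicator_apply, mem_preimage, hcos₁, hcos₂, hxs]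
end
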